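/- $\sum_{n=1}^{\infty} \frac{1}{n^2 \binom{2n}{n}}\left(8 \sum_{j=1}^{n} \frac{(-1)^j}{j^4} + \frac{(-1)^n}{n^4}\right) = -\frac{22\,\zeta(3)^2}{15} - \frac{97\pi^6}{34020}$. -/

import Mathlib

open Filter Topology

/-- Alternating harmonic-type sum `∑_{j=1}^n (-1)^j / j^s`. -/
noncomputable def A (s n : ℕ) : ℝ := ∑ j ∈ Finset.range n, (-1:ℝ)^(j+1) / ((j:ℝ) + 1) ^ s

/-- The Riemann zeta value `ζ(s) = ∑_{n ≥ 1} 1/n^s`. -/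
noncomputable def zeta (s : ℕ) : ℝ := ∑' n : ℕ, 1 / ((n:ℝ) + 1) ^ s

/-!
Work with power series in `X`, the parameters `a, b, c, d` entering the rising factorials linearly.
A Wilf–Zeilberger pair `F m (l + 1) - F (m + 1) l = G m (l + 1) - G m l` transforms the slowly
convergent series `∑ l, F 0 l` into `∑ m, (F m 0 - G m 0)`, whose terms decay like the inverse
central binomial coefficient of `2 * m`; the boundary terms vanish coefficientwise.

For the parameters `(a, a, x, y)` and `(a, x, a, y)` the left-hand side is Dougall's very well
poised `₅F₄` series without its first term, divided by `(a + x) X * (a + y) X`. Its product formula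
then gives the coefficient of `X ^ 4` as the coefficient of `X ^ 6` of an infinite product with
known logarithmic derivative, hence as a polynomial in zeta values. For `a = 0` and `b + c + d = 0`
that coefficient is a multiple of `ζ(6)`.

On the right-hand side, the coefficient of `X ^ 4` of the `m`-th term is, up to a factor independent
of the parameters, a polynomial in the parameters and in the power sums of `1 / (k + 1)` and
`1 / (k + 1 / 2)`. A rational combination of seventeen specializations cancels everything except the
alternating sum of fourth powers, and what remains is the sum of the terms of index `2 * m + 1` and
`2 * m + 2` of the binomial series.
-/

namespace WZ

open PowerSeries Finset
open scoped NNReal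

section Seminorm
variable {R : Type*} [SeminormedCommRing R]

/-- The weighted `ℓ¹` seminorm `∑_{i < N} ‖coeff i f‖ r ^ i` of a power series truncated at order
`N`. It turns bounds on products of power series into bounds on finitely many coefficients. -/
noncomputable def truncSeminorm (N : ℕ) (r : ℝ≥0) : RingSeminorm R⟦X⟧ where
  toFun f := ∑ i ∈ range N, ‖coeff i f‖ * r ^ i
  map_zero' := by simp
  add_le' f g := by
    rw [← sum_add_distrib]
    gcongr with i
    rw [← add_mul, map_add]
    gcongr
    exact norm_add_le _ _
  neg' f := by simp
  mul_le' f g := by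
    set φ : ℕ × ℕ → ℝ := fun p => ‖coeff p.1 f‖ * r ^ p.1 * (‖coeff p.2 g‖ * r ^ p.2) with hφ
    have hcoeff (i : ℕ) : ‖coeff i (f * g)‖ * r ^ i ≤ ∑ p ∈ antidiagonal i, φ p := by
      rw [coeff_mul]
      grw [norm_sum_le]
      rw [sum_mul]
      refine sum_le_sum fun p hp => ?_
      grw [norm_mul_le]
      rw [hφ, ← HasAntidiagonal.mem_antidiagonal.1 hp, pow_add, mul_mul_mul_comm]
    have hfiber : ∀ i ∈ range N,
        antidiagonal i = {p ∈ range N ×ˢ range N | p.1 + p.2 = i} := fun i hi => by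
      ext p
      simp only [HasAntidiagonal.mem_antidiagonal, mem_filter, mem_product, mem_range] at hi ⊢
      omega
    calc ∑ i ∈ range N, ‖coeff i (f * g)‖ * r ^ i
        ≤ ∑ i ∈ range N, ∑ p ∈ range N ×ˢ range N with p.1 + p.2 = i, φ p :=
          sum_le_sum fun i hi => hfiber i hi ▸ hcoeff i
      _ ≤ ∑ p ∈ range N ×ˢ range N, φ p :=
          sum_fiberwise_le_sum_of_sum_fiber_nonneg fun i _ => sum_nonneg fun p _ => by positivity
      _ = _ := by rw [sum_product, sum_mul_sum]

lemma truncSeminorm_apply (N : ℕ) (r : ℝ≥0) (f : R⟦X⟧) :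
    truncSeminorm N r f = ∑ i ∈ range N, ‖coeff i f‖ * r ^ i := rfl

lemma truncSeminorm_C_le (N : ℕ) (r : ℝ≥0) (c : R) : truncSeminorm N r (C c) ≤ ‖c‖ := by
  cases N with
  | zero => simp [truncSeminorm_apply]
  | succ N => simp [truncSeminorm_apply, sum_range_succ', coeff_C]

lemma truncSeminorm_X_le [NormOneClass R] (N : ℕ) (r : ℝ≥0) :
    truncSeminorm N r (X : R⟦X⟧) ≤ r := by
  rcases N with - | - | N
  · simp [truncSeminorm_apply]
  · simp [truncSeminorm_apply]
  · simp [truncSeminorm_apply, sum_range_succ', coeff_X]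

lemma norm_coeff_mul_pow_le_truncSeminorm {N i : ℕ} (hi : i < N) (r : ℝ≥0) (f : R⟦X⟧) :
    ‖coeff i f‖ * r ^ i ≤ truncSeminorm N r f :=
  single_le_sum (f := fun i => ‖coeff i f‖ * (r : ℝ) ^ i) (fun _ _ => by positivity)
    (mem_range.2 hi)

lemma tendsto_coeff_of_truncSeminorm {N i : ℕ} (hi : i < N) {r : ℝ≥0} (hr : 0 < r)
    {f : ℕ → R⟦X⟧} (hf : Tendsto (fun n => truncSeminorm N r (f n)) atTop (𝓝 0)) :
    Tendsto (fun n => coeff i (f n)) atTop (𝓝 0) := by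
  refine squeeze_zero_norm (fun n => ?_) (by simpa using hf.div_const ((r : ℝ) ^ i))
  rw [le_div_iff₀ (by positivity)]
  exact norm_coeff_mul_pow_le_truncSeminorm hi r (f n)

end Seminorm

section Rising

/-- The linear power series `k + x X`. -/
noncomputable def affine (k x : ℝ) : ℝ⟦X⟧ := C k + C x * X

/-- The rising factorial `(k + x X)_n = ∏_{i < n} (k + i + x X)`, a power series whose value at
`X = 0` is the Pochhammer symbol `(k)_n`. -/
noncomputable def rising (k x : ℝ) (n : ℕ) : ℝ⟦X⟧ := (ascPochhammer ℝ⟦X⟧ n).eval (affine k x)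

lemma constantCoeff_affine (k x : ℝ) : constantCoeff (affine k x) = k := by simp [affine]

lemma affine_mul_inv {k : ℝ} (hk : k ≠ 0) (x : ℝ) : affine k x * (affine k x)⁻¹ = 1 :=
  PowerSeries.mul_inv_cancel _ (by rwa [constantCoeff_affine])

@[simp] lemma rising_zero (k x : ℝ) : rising k x 0 = 1 := by simp [rising]

lemma rising_succ (k x : ℝ) (n : ℕ) : rising k x (n + 1) = rising k x n * affine (k + n) x := by
  rw [rising, ascPochhammer_succ_eval]
  simp only [rising, affine, map_add, map_natCast]
  ring

lemma constantCoeff_rising (k x : ℝ) (n : ℕ) :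
    constantCoeff (rising k x n) = (ascPochhammer ℝ n).eval k := by
  induction n with
  | zero => simp
  | succ n ih => rw [rising_succ, map_mul, ih, constantCoeff_affine, ascPochhammer_succ_eval]

lemma inv_rising_succ_mul {k : ℝ} (hk : 0 < k) (x : ℝ) (n : ℕ) :
    (rising k x (n + 1))⁻¹ * affine (k + n) x = (rising k x n)⁻¹ := by
  rw [rising_succ, PowerSeries.mul_inv_rev, mul_right_comm, mul_comm _ (affine _ _),
    affine_mul_inv (by positivity), one_mul]

end Rising

section Domination

/-- The size of `f` in the seminorm `p` is at most `M` times its constant coefficient. Applied to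
quotients of rising factorials, this reduces estimates to their real leading terms, at the price of
the loss factor `M`. -/
def DominatedBy (p : RingSeminorm ℝ⟦X⟧) (M : ℝ) (f : ℝ⟦X⟧) : Prop := p f ≤ M * constantCoeff f

/-- The loss factor `exp (θ H_n)`, of size `n ^ θ`, for a rising factorial of length `n`. -/
noncomputable def loss (θ : ℝ) (n : ℕ) : ℝ := Real.exp (θ * harmonic n)

lemma loss_zero (θ : ℝ) : loss θ 0 = 1 := by simp [loss]

lemma loss_succ (θ : ℝ) (n : ℕ) : loss θ (n + 1) = loss θ n * Real.exp (θ / (n + 1)) := by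
  rw [loss, loss, ← Real.exp_add, harmonic_succ]
  push_cast
  ring_nf

lemma loss_pos (θ : ℝ) (n : ℕ) : 0 < loss θ n := Real.exp_pos _

lemma loss_mono {θ : ℝ} (hθ : 0 ≤ θ) : Monotone (loss θ) :=
  monotone_nat_of_le_succ fun n => by
    rw [loss_succ]
    exact le_mul_of_one_le_right (loss_pos θ n).le (Real.one_le_exp (by positivity))

variable {p : RingSeminorm ℝ⟦X⟧} {M M' : ℝ} {f g : ℝ⟦X⟧}

lemma DominatedBy.mul (hf : DominatedBy p M f) (hg : DominatedBy p M' g) :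
    DominatedBy p (M * M') (f * g) :=
  calc p (f * g) ≤ p f * p g := map_mul_le_mul p f g
    _ ≤ M * constantCoeff f * (M' * constantCoeff g) :=
      mul_le_mul hf hg (apply_nonneg p g) ((apply_nonneg p f).trans hf)
    _ = M * M' * constantCoeff (f * g) := by rw [map_mul]; ring

lemma DominatedBy.constantCoeff_nonneg (hf : DominatedBy p M f) (hM : 0 < M) :
    0 ≤ constantCoeff f :=
  nonneg_of_mul_nonneg_right ((apply_nonneg p f).trans hf) hM

lemma DominatedBy.mono (hf : DominatedBy p M f) (hM : 0 < M) (hMM' : M ≤ M') :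
    DominatedBy p M' f :=
  hf.trans (mul_le_mul_of_nonneg_right hMM' (hf.constantCoeff_nonneg hM))

variable {N : ℕ} {r : ℝ≥0}

lemma dominatedBy_C {c : ℝ} (hc : 0 ≤ c) : DominatedBy (truncSeminorm N r) 1 (C c) := by
  have := truncSeminorm_C_le N r c
  rw [Real.norm_of_nonneg hc] at this
  simpa [DominatedBy] using this

lemma truncSeminorm_affine_le (k x : ℝ) : truncSeminorm N r (affine k x) ≤ |k| + |x| * r := by
  unfold affine
  grw [map_add_le_add, map_mul_le_mul, truncSeminorm_C_le, truncSeminorm_C_le, truncSeminorm_X_le]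
  rfl

lemma truncSeminorm_affine_inv_le {k x : ℝ} (hx : |x| * r < k) :
    truncSeminorm N r (affine k x)⁻¹ ≤ 1 / (k - |x| * r) := by
  have hk : 0 < k := lt_of_le_of_lt (by positivity) hx
  set u := (affine k x)⁻¹
  have hmul : affine k x * u = 1 := affine_mul_inv hk.ne' x
  have hfix : u = C (1 / k) * (C 1 - C x * X * u) := by
    have hC : (C (1 / k) : ℝ⟦X⟧) * C k = 1 := by rw [← map_mul, one_div_mul_cancel hk.ne', map_one]
    rw [affine] at hmul
    rw [map_one]
    linear_combination C (1 / k) * hmul - u * hC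
  have hle : truncSeminorm N r u ≤ 1 / k * (1 + |x| * r * truncSeminorm N r u) := by
    conv_lhs => rw [hfix]
    grw [map_mul_le_mul, map_sub_le_add, map_mul_le_mul, map_mul_le_mul, truncSeminorm_C_le,
      truncSeminorm_C_le, truncSeminorm_C_le, truncSeminorm_X_le]
    simp [abs_of_pos hk]
  rw [one_div_mul_eq_div, le_div_iff₀ hk] at hle
  rw [le_div_iff₀ (by linarith)]
  linarith

lemma two_mul_abs_mul_div_le {θ k x : ℝ} (hk : 1 / 2 ≤ k) (hx : 4 * (|x| * r) ≤ θ) (n : ℕ) :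
    2 * (|x| * r / (k + n)) ≤ θ / (n + 1) := by
  have : 0 ≤ |x| * r := by positivity
  rw [mul_div_assoc', div_le_div_iff₀ (by positivity) (by positivity)]
  nlinarith [mul_nonneg this (n.cast_nonneg (α := ℝ))]

lemma dominatedBy_affine {θ k x : ℝ} (hk : 1 / 2 ≤ k) (hx : 4 * (|x| * r) ≤ θ) (n : ℕ) :
    DominatedBy (truncSeminorm N r) (Real.exp (θ / (n + 1))) (affine (k + n) x) := by
  have hkn : 0 < k + n := by positivity
  rw [DominatedBy, constantCoeff_affine]
  calc truncSeminorm N r (affine (k + n) x) ≤ |k + n| + |x| * r := truncSeminorm_affine_le _ _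
    _ = (|x| * r / (k + n) + 1) * (k + n) := by rw [abs_of_pos hkn]; field_simp; ring
    _ ≤ Real.exp (θ / (n + 1)) * (k + n) := by
      gcongr
      have : 0 ≤ |x| * r / (k + n) := by positivity
      linarith [two_mul_abs_mul_div_le hk hx n, Real.add_one_le_exp (θ / (n + 1))]

lemma dominatedBy_affine_inv {θ k x : ℝ} (hk : 1 / 2 ≤ k) (hθ : θ ≤ 1) (hx : 4 * (|x| * r) ≤ θ)
    (n : ℕ) : DominatedBy (truncSeminorm N r) (Real.exp (θ / (n + 1))) (affine (k + n) x)⁻¹ := by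
  have hkn : 0 < k + n := by positivity
  set y := |x| * r / (k + n) with hy
  have hy0 : 0 ≤ y := by positivity
  have hyθ : 2 * y ≤ θ / (n + 1) := two_mul_abs_mul_div_le hk hx n
  have hy1 : 2 * y ≤ 1 := hyθ.trans ((div_le_one (by positivity)).2 (by linarith))
  have hxy : |x| * r = y * (k + n) := by rw [hy]; field_simp
  rw [DominatedBy, constantCoeff_inv, constantCoeff_affine]
  calc truncSeminorm N r (affine (k + n) x)⁻¹
      ≤ 1 / (k + n - |x| * r) := truncSeminorm_affine_inv_le (by rw [hxy]; nlinarith)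
    _ = 1 / (1 - y) * (k + n)⁻¹ := by rw [hxy, ← one_sub_mul, ← div_div, ← div_eq_mul_inv]
    _ ≤ Real.exp (θ / (n + 1)) * (k + n)⁻¹ := by
      gcongr
      calc 1 / (1 - y) ≤ 2 * y + 1 := by rw [div_le_iff₀ (by linarith)]; nlinarith
        _ ≤ θ / (n + 1) + 1 := by gcongr
        _ ≤ _ := Real.add_one_le_exp _

lemma dominatedBy_one : DominatedBy (truncSeminorm N r) 1 1 := by
  simpa using dominatedBy_C (N := N) (r := r) zero_le_one

lemma dominatedBy_rising {θ k x : ℝ} (hk : 1 / 2 ≤ k) (hx : 4 * (|x| * r) ≤ θ) (n : ℕ) :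
    DominatedBy (truncSeminorm N r) (loss θ n) (rising k x n) := by
  induction n with
  | zero => simpa [loss_zero] using dominatedBy_one
  | succ n ih => rw [rising_succ, loss_succ]; exact ih.mul (dominatedBy_affine hk hx n)

lemma dominatedBy_rising_inv {θ k x : ℝ} (hk : 1 / 2 ≤ k) (hθ : θ ≤ 1) (hx : 4 * (|x| * r) ≤ θ)
    (n : ℕ) : DominatedBy (truncSeminorm N r) (loss θ n) (rising k x n)⁻¹ := by
  induction n with
  | zero => simpa [loss_zero] using dominatedBy_one
  | succ n ih =>
    rw [rising_succ, loss_succ, PowerSeries.mul_inv_rev, mul_comm _⁻¹]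
    exact ih.mul (dominatedBy_affine_inv hk hθ hx n)

lemma eventually_mul_abs_le (x : ℝ) {θ : ℝ} (hθ : 0 < θ) :
    ∀ᶠ r : ℝ≥0 in 𝓝[>] 0, 4 * (|x| * r) ≤ θ := by
  have : Tendsto (fun r : ℝ≥0 => 4 * (|x| * r)) (𝓝[>] 0) (𝓝 0) := by
    have : Continuous fun r : ℝ≥0 => 4 * (|x| * r) := by fun_prop
    simpa using (this.tendsto 0).mono_left nhdsWithin_le_nhds
  exact (this.eventually (gt_mem_nhds hθ)).mono fun _ => le_of_lt

end Domination

section LogDeriv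

/-- `s` is a logarithmic derivative of `f`. The low coefficients of a product of rising factorials
are computed from those of its logarithmic derivative, which are power sums. -/
def IsLogDeriv {R : Type*} [CommSemiring R] (f s : R⟦X⟧) : Prop := d⁄dX R f = f * s

lemma IsLogDeriv.mul {R : Type*} [CommSemiring R] {f g s t : R⟦X⟧} (hf : IsLogDeriv f s)
    (hg : IsLogDeriv g t) : IsLogDeriv (f * g) (s + t) := by
  rw [IsLogDeriv, Derivation.leibniz, hf, hg, smul_eq_mul, smul_eq_mul]
  ring

lemma isLogDeriv_C {R : Type*} [CommSemiring R] (c : R) : IsLogDeriv (C c) 0 := by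
  simp [IsLogDeriv]

variable {K : Type*} [Field K] {f s : K⟦X⟧}

lemma IsLogDeriv.inv (hf : IsLogDeriv f s) (h0 : constantCoeff f ≠ 0) :
    IsLogDeriv f⁻¹ (-s) := by
  rw [IsLogDeriv, derivative_inv', hf]
  linear_combination (-(f⁻¹ * s)) * PowerSeries.mul_inv_cancel f h0

lemma IsLogDeriv.coeff_succ (h : IsLogDeriv f s) (n : ℕ) :
    coeff (n + 1) f * (n + 1) = ∑ i ∈ range (n + 1), coeff i f * coeff (n - i) s := by
  rw [← coeff_derivative, h, coeff_mul, Nat.sum_antidiagonal_eq_sum_range_succ_mk]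

variable [CharZero K]

lemma IsLogDeriv.coeff_one (h : IsLogDeriv f s) : coeff 1 f = coeff 0 f * coeff 0 s := by
  simpa using h.coeff_succ 0

lemma IsLogDeriv.coeff_two (h : IsLogDeriv f s) :
    coeff 2 f = coeff 0 f * ((coeff 1 s + coeff 0 s ^ 2) / 2) := by
  have := h.coeff_succ 1
  norm_num only [sum_range_succ, sum_range_zero, Nat.cast_one, h.coeff_one] at this
  linear_combination this / 2

lemma IsLogDeriv.coeff_three (h : IsLogDeriv f s) :
    coeff 3 f = coeff 0 f *
      ((2 * coeff 2 s + 3 * coeff 0 s * coeff 1 s + coeff 0 s ^ 3) / 6) := by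
  have := h.coeff_succ 2
  norm_num only [sum_range_succ, sum_range_zero, Nat.cast_ofNat, h.coeff_one,
    h.coeff_two] at this
  linear_combination this / 3

lemma IsLogDeriv.coeff_four (h : IsLogDeriv f s) :
    coeff 4 f = coeff 0 f * ((6 * coeff 3 s + 8 * coeff 0 s * coeff 2 s + 3 * coeff 1 s ^ 2 +
      6 * coeff 0 s ^ 2 * coeff 1 s + coeff 0 s ^ 4) / 24) := by
  have := h.coeff_succ 3
  norm_num only [sum_range_succ, sum_range_zero, Nat.cast_ofNat, h.coeff_one, h.coeff_two,
    h.coeff_three] at this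
  linear_combination this / 4

lemma IsLogDeriv.coeff_six (h : IsLogDeriv f s) (h0 : coeff 0 s = 0) :
    coeff 6 f = coeff 0 f * (coeff 5 s / 6 + coeff 1 s * coeff 3 s / 8 + coeff 2 s ^ 2 / 18 +
      coeff 1 s ^ 3 / 48) := by
  have := h.coeff_succ 5
  norm_num only [sum_range_succ, sum_range_zero, Nat.cast_ofNat, h.coeff_one, h.coeff_two,
    h.coeff_three, h.coeff_four, h0] at this
  linear_combination this / 6

/-- The power sum `∑_{i < n} 1 / (k + i) ^ j`. -/
noncomputable def powerSum (k : ℝ) (j n : ℕ) : ℝ := ∑ i ∈ range n, 1 / (k + i) ^ j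

/-- The logarithmic derivative of the rising factorial `(k + x X)_n`. -/
noncomputable def risingLogDeriv (k x : ℝ) (n : ℕ) : ℝ⟦X⟧ :=
  mk fun j => (-1) ^ j * x ^ (j + 1) * powerSum k (j + 1) n

lemma isLogDeriv_affine {k : ℝ} (hk : k ≠ 0) (x : ℝ) :
    IsLogDeriv (affine k x) (mk fun j => (-1) ^ j * x ^ (j + 1) * (1 / k ^ (j + 1))) := by
  rw [IsLogDeriv]
  ext n
  cases n with
  | zero =>
    simp only [affine, add_mul, mul_assoc, map_add, coeff_C_mul, coeff_zero_X_mul, coeff_mk,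
      Derivation.leibniz, derivative_C, derivative_X, smul_eq_mul, mul_zero, mul_one, add_zero,
      zero_add, coeff_zero_C]
    field_simp
  | succ n =>
    simp only [affine, add_mul, mul_assoc, map_add, coeff_C_mul, coeff_succ_X_mul, coeff_mk,
      Derivation.leibniz, derivative_C, derivative_X, smul_eq_mul, mul_zero, mul_one, add_zero,
      zero_add, coeff_C_of_ne_zero n.succ_ne_zero]
    field_simp
    ring

lemma isLogDeriv_rising {k : ℝ} (hk : 0 < k) (x : ℝ) (n : ℕ) :
    IsLogDeriv (rising k x n) (risingLogDeriv k x n) := by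
  induction n with
  | zero =>
    convert isLogDeriv_C (1 : ℝ) using 1
    · simp
    · ext j; simp [risingLogDeriv, powerSum]
  | succ n ih =>
    convert ih.mul (isLogDeriv_affine (by positivity : k + n ≠ 0) x) using 1
    · exact rising_succ k x n
    · ext j; simp [risingLogDeriv, powerSum, sum_range_succ, mul_add]

lemma isLogDeriv_rising_inv {k : ℝ} (hk : 0 < k) (x : ℝ) (n : ℕ) :
    IsLogDeriv (rising k x n)⁻¹ (-risingLogDeriv k x n) := by
  refine (isLogDeriv_rising hk x n).inv ?_
  rw [constantCoeff_rising]
  exact (ascPochhammer_pos n k hk).ne'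

end LogDeriv

section Certificate
variable {R : Type*} [CommRing R]

/-- The constant term `ν` of the quadratic certificate `κ (n ^ 2 ± n) + ν` of the WZ pair. -/
def certConst (κ σ b e c d : R) : R :=
  σ * (c ^ 2 + d ^ 2 +
    κ * ((b * e + c * d - (b + e) * (c + d)) + (c * d * (b + e) - b * e * (c + d))))

lemma certConst_residue {κ σ b e c d : R} (hκ : κ * (c + d - b - e - 1) = -1)
    (hσ : σ * (c + d - b - e) = 1) :
    c ^ 2 * d ^ 2 - certConst κ σ b e c d * (c * d * (b + e) - b * e * (c + d))
        - κ * (b * e * c * d) =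
      -(κ * σ * ((c - b) * (d - b) * (c - e) * (d - e) * (c + d - 1) * (c + d))) := by
  rw [certConst]
  linear_combination (-(c ^ 2 * d ^ 2) + σ * (c * d * (b + e) - b * e * (c + d)) *
    (c ^ 2 + d ^ 2) - c ^ 2 * d ^ 2 * (σ * (c + d - b - e) - 1)) * -hκ +
    (κ * (b * e * c * d) - c ^ 2 * d ^ 2) * hσ

lemma certificate_identity {κ σ b e c d : R} (hκ : κ * (c + d - b - e - 1) = -1)
    (hσ : σ * (c + d - b - e) = 1) (n : R) :
    2 * n * ((n - c) * (n - d) * (n + c) * (n + d)) =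
      2 * n * -(κ * σ * ((c - b) * (d - b) * (c - e) * (d - e) * (c + d - 1) * (c + d)))
      + (κ * (n ^ 2 + n) + certConst κ σ b e c d) * ((n + b) * (n + e) * (n - c) * (n - d))
      - (κ * (n ^ 2 - n) + certConst κ σ b e c d) * ((n - b) * (n - e) * (n + c) * (n + d)) := by
  have hν : certConst κ σ b e c d * (c + d - b - e) = c ^ 2 + d ^ 2 +
      κ * ((b * e + c * d - (b + e) * (c + d)) + (c * d * (b + e) - b * e * (c + d))) := by
    rw [certConst, mul_right_comm, hσ, one_mul]
  rw [← certConst_residue hκ hσ]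
  linear_combination 2 * n ^ 5 * hκ + 2 * n ^ 3 * hν

lemma certificate_telescope [IsDomain R] {κ σ b e c d n H H' T Tr Tl : R}
    (hκ : κ * (c + d - b - e - 1) = -1) (hσ : σ * (c + d - b - e) = 1)
    (hden : (n - b) * (n - e) * ((n + c) * (n + d)) ≠ 0)
    (hhead : H' * ((c + d - b - e - 1) * (c + d - b - e)) =
      H * ((c - b) * (d - b) * (c - e) * (d - e) * ((c + d - 1) * (c + d))))
    (hright : Tr * ((n - b) * (n - e) * ((n + c) * (n + d))) =
      T * ((n + b - 1) * (n + e - 1) * ((n - c) * (n - d))))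
    (hleft : Tl * ((n - b) * (n - e) * ((n + c) * (n + d)) * ((n + c + 1) * (n + d + 1))) =
      T * ((n + b - 1) * (n + e - 1))) :
    H * Tr * (n + n) * (n + c) * (n + d) = H' * Tl * (n + n) * (n + c + 1) * (n + d + 1) +
      H * Tr * (κ * (n * (n + 1)) + certConst κ σ b e c d) * (n + b) * (n + e) -
      H * T * (κ * ((n - 1) * n) + certConst κ σ b e c d) * (n + b - 1) * (n + e - 1) := by
  refine mul_right_cancel₀ hden ?_
  have hid := certificate_identity hκ hσ n
  have hhead' : H' = -(κ * σ * (H * ((c - b) * (d - b) * (c - e) * (d - e) *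
      ((c + d - 1) * (c + d))))) := by
    linear_combination -(κ * σ) * hhead + H' * σ * (c + d - b - e) * hκ - H' * hσ
  set ν := certConst κ σ b e c d
  set P := (n + b - 1) * (n + e - 1)
  linear_combination H * (2 * n * (n + c) * (n + d) -
      (κ * (n * (n + 1)) + ν) * (n + b) * (n + e)) * hright
    - H' * (2 * n) * hleft + H * T * P * hid - 2 * n * T * P * hhead'

end Certificate

section WZPair
variable (a b c d : ℝ)

/-- The part of the WZ kernel that depends only on the first index. -/
noncomputable def kernelHead (m : ℕ) : ℝ⟦X⟧ :=
  rising 1 (-c - b) m * rising 1 (-d - b) m * rising (1 / 2) (b + d) m * rising (1 / 2) (b + c) m *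
    rising 1 (-c - d) (2 * m) * (rising (1 / 2) 0 (2 * m))⁻¹

/-- The part of the WZ kernel that depends on both indices. -/
noncomputable def kernelTail (m l : ℕ) : ℝ⟦X⟧ :=
  rising 1 (a + b) (m + l) * rising (1 / 2) (a - b - c - d) (m + l + 1) * rising 1 (a + c) l *
    rising 1 (a + d) l * (rising 1 (a - b) (m + l + 1))⁻¹ *
    (rising (1 / 2) (a + b + c + d) (m + l + 1))⁻¹ * (rising 1 (a - c) (2 * m + l + 2))⁻¹ *
    (rising 1 (a - d) (2 * m + l + 2))⁻¹

/-- The common hypergeometric factor of the two members `wzF` and `wzG` of the WZ pair. -/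
noncomputable def kernel (m l : ℕ) : ℝ⟦X⟧ := kernelHead b c d m * kernelTail a b c d m l

/-- The first member of the WZ pair. The series `∑ l, wzF 0 l` is the well-poised `₅F₄`-type series
that is transformed into `∑ m, wzT m`. -/
noncomputable def wzF (m l : ℕ) : ℝ⟦X⟧ :=
  kernel a b c d m l * affine (2 * (m + l + 1)) (2 * a) * affine (2 * m + l + 2) (a - c) *
    affine (2 * m + l + 2) (a - d)

/-- The quadratic polynomial factor of `wzG`. -/
noncomputable def wzCertificate (m l : ℕ) : ℝ⟦X⟧ :=
  C (-1 / (2 * m + 1 / 2) : ℝ) * (affine (m + l + 1) a * affine (m + l + 2) a) +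
    certConst (C (-1 / (2 * m + 1 / 2) : ℝ)) (C (1 / (2 * m + 3 / 2) : ℝ)) (affine 0 b)
      (affine (1 / 2) (-b - c - d)) (affine (m + 1) (-c)) (affine (m + 1) (-d))

/-- The second member of the WZ pair. -/
noncomputable def wzG (m l : ℕ) : ℝ⟦X⟧ :=
  kernel a b c d m l * wzCertificate a b c d m l * affine (m + l + 1) (a + b) *
    affine (m + l + 3 / 2) (a - b - c - d)

/-- The terms of the transformed series. -/
noncomputable def wzT (m : ℕ) : ℝ⟦X⟧ := wzF a b c d m 0 - wzG a b c d m 0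

lemma affine_add (k l x y : ℝ) : affine (k + l) (x + y) = affine k x + affine l y := by
  simp only [affine, map_add]; ring

lemma affine_sub (k l x y : ℝ) : affine (k - l) (x - y) = affine k x - affine l y := by
  simp only [affine, map_sub]; ring

lemma affine_one : affine 1 0 = 1 := by simp [affine]

variable {a b c d}

lemma rising_succ_eq {k k' : ℝ} (x : ℝ) {n : ℕ} (h : k + n = k') :
    rising k x (n + 1) = rising k x n * affine k' x := h ▸ rising_succ k x n

lemma inv_rising_eq {k k' : ℝ} (hk : 0 < k) (x : ℝ) {n : ℕ} (h : k + n = k') :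
    (rising k x n)⁻¹ = (rising k x (n + 1))⁻¹ * affine k' x := h ▸ (inv_rising_succ_mul hk x n).symm

lemma kernelTail_succ_right (m l : ℕ) :
    kernelTail a b c d m (l + 1) *
        (affine (m + l + 2) (a - b) * affine (m + l + 3 / 2) (a + b + c + d) *
          (affine (2 * m + l + 3) (a - c) * affine (2 * m + l + 3) (a - d))) =
      kernelTail a b c d m l *
        (affine (m + l + 1) (a + b) * affine (m + l + 3 / 2) (a - b - c - d) *
          (affine (l + 1) (a + c) * affine (l + 1) (a + d))) := by
  simp only [kernelTail, ← add_assoc, add_right_comm _ 1 2]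
  rw [rising_succ_eq (k' := m + l + 1) (a + b) (by push_cast; ring),
    rising_succ_eq (k' := m + l + 3 / 2) (n := m + l + 1) (a - b - c - d) (by push_cast; ring),
    rising_succ_eq (k' := l + 1) (a + c) (by ring), rising_succ_eq (k' := l + 1) (a + d) (by ring),
    inv_rising_eq (k' := m + l + 2) one_pos (a - b) (n := m + l + 1) (by push_cast; ring),
    inv_rising_eq (k' := m + l + 3 / 2) one_half_pos (a + b + c + d) (n := m + l + 1)
      (by push_cast; ring),
    inv_rising_eq (k' := 2 * m + l + 3) one_pos (a - c) (n := 2 * m + l + 2) (by push_cast; ring),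
    inv_rising_eq (k' := 2 * m + l + 3) one_pos (a - d) (n := 2 * m + l + 2) (by push_cast; ring)]
  ring

lemma kernelTail_succ_left (m l : ℕ) :
    kernelTail a b c d (m + 1) l *
        (affine (m + l + 2) (a - b) * affine (m + l + 3 / 2) (a + b + c + d) *
          (affine (2 * m + l + 3) (a - c) * affine (2 * m + l + 3) (a - d)) *
          (affine (2 * m + l + 4) (a - c) * affine (2 * m + l + 4) (a - d))) =
      kernelTail a b c d m l *
        (affine (m + l + 1) (a + b) * affine (m + l + 3 / 2) (a - b - c - d)) := by
  have hindex : 2 * (m + 1) + l + 2 = 2 * m + l + 2 + 1 + 1 := by ring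
  simp only [kernelTail, hindex, add_right_comm m 1 l]
  rw [rising_succ_eq (k' := m + l + 1) (a + b) (by push_cast; ring),
    rising_succ_eq (k' := m + l + 3 / 2) (n := m + l + 1) (a - b - c - d) (by push_cast; ring),
    inv_rising_eq (k' := m + l + 2) one_pos (a - b) (n := m + l + 1) (by push_cast; ring),
    inv_rising_eq (k' := m + l + 3 / 2) one_half_pos (a + b + c + d) (n := m + l + 1)
      (by push_cast; ring),
    inv_rising_eq (k' := 2 * m + l + 3) one_pos (a - c) (n := 2 * m + l + 2) (by push_cast; ring),
    inv_rising_eq (k' := 2 * m + l + 3) one_pos (a - d) (n := 2 * m + l + 2) (by push_cast; ring),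
    inv_rising_eq (k' := 2 * m + l + 4) one_pos (a - c) (n := 2 * m + l + 2 + 1)
      (by push_cast; ring),
    inv_rising_eq (k' := 2 * m + l + 4) one_pos (a - d) (n := 2 * m + l + 2 + 1)
      (by push_cast; ring)]
  ring

lemma kernelHead_succ (m : ℕ) :
    kernelHead b c d (m + 1) * (affine (2 * m + 1 / 2) 0 * affine (2 * m + 3 / 2) 0) =
      kernelHead b c d m *
        (affine (m + 1) (-c - b) * affine (m + 1) (-d - b) * affine (m + 1 / 2) (b + d) *
          affine (m + 1 / 2) (b + c) * (affine (2 * m + 1) (-c - d) *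
            affine (2 * m + 2) (-c - d))) := by
  rw [kernelHead, kernelHead, show 2 * (m + 1) = 2 * m + 1 + 1 by ring,
    rising_succ_eq (k' := m + 1) (-c - b) (by ring),
    rising_succ_eq (k' := m + 1) (-d - b) (by ring),
    rising_succ_eq (k' := m + 1 / 2) (b + d) (by ring),
    rising_succ_eq (k' := m + 1 / 2) (b + c) (by ring),
    rising_succ_eq (k' := 2 * m + 2) (n := 2 * m + 1) (-c - d) (by push_cast; ring),
    rising_succ_eq (k' := 2 * m + 1) (-c - d) (by push_cast; ring),
    inv_rising_eq (k' := 2 * m + 1 / 2) one_half_pos 0 (n := 2 * m) (by push_cast; ring),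
    inv_rising_eq (k' := 2 * m + 3 / 2) one_half_pos 0 (n := 2 * m + 1) (by push_cast; ring)]
  ring

lemma affine_ne_zero {k : ℝ} (hk : k ≠ 0) (x : ℝ) : affine k x ≠ 0 := fun h =>
  hk (by simpa [constantCoeff_affine] using congrArg constantCoeff h)

lemma C_div_mul_affine {k : ℝ} (hk : k ≠ 0) (t : ℝ) : C (t / k) * affine k 0 = C t := by
  rw [affine, map_zero, zero_mul, add_zero, ← map_mul, div_mul_cancel₀ _ hk]

lemma kernelHead_succ_mul (m : ℕ) {b' c' d' e' : ℝ⟦X⟧} (hb : b' = affine 0 b)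
    (he : e' = affine (1 / 2) (-b - c - d)) (hc : c' = affine (m + 1) (-c))
    (hd : d' = affine (m + 1) (-d)) :
    kernelHead b c d (m + 1) * ((c' + d' - b' - e' - 1) * (c' + d' - b' - e')) =
      kernelHead b c d m *
        ((c' - b') * (d' - b') * (c' - e') * (d' - e') * ((c' + d' - 1) * (c' + d'))) := by
  convert kernelHead_succ m using 3
  all_goals
    simp only [hb, he, hc, hd, ← affine_add, ← affine_sub, ← affine_one]
    ring_nf

lemma wzF_succ (m l : ℕ) :
    wzF a b c d m (l + 1) = wzF a b c d (m + 1) l + wzG a b c d m (l + 1) - wzG a b c d m l := by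
  set n := affine (m + l + 2) a with hn
  set b' := affine 0 b with hb
  set e' := affine (1 / 2) (-b - c - d) with he
  set c' := affine (m + 1) (-c) with hc
  set d' := affine (m + 1) (-d) with hd
  obtain ⟨a₁, a₂, a₃, a₄, a₅, a₆, a₇, a₈, a₉, a₁₀, a₁₁, a₁₂, hsum, hsum'⟩ :
      affine (m + l + 2) (a - b) = n - b' ∧ affine (m + l + 3 / 2) (a + b + c + d) = n - e' ∧
      affine (2 * m + l + 3) (a - c) = n + c' ∧ affine (2 * m + l + 3) (a - d) = n + d' ∧
      affine (2 * m + l + 4) (a - c) = n + c' + 1 ∧ affine (2 * m + l + 4) (a - d) = n + d' + 1 ∧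
      affine (l + 1) (a + c) = n - c' ∧ affine (l + 1) (a + d) = n - d' ∧
      affine (m + l + 1) (a + b) = n + b' - 1 ∧
      affine (m + l + 3 / 2) (a - b - c - d) = n + e' - 1 ∧
      affine (m + l + 1) a = n - 1 ∧ affine (2 * (m + l + 2)) (2 * a) = n + n ∧
      affine (2 * m + 3 / 2) 0 = c' + d' - b' - e' ∧
      affine (2 * m + 1 / 2) 0 = c' + d' - b' - e' - 1 := by
    simp only [hn, hb, he, hc, hd, ← affine_add, ← affine_sub, ← affine_one]
    refine ⟨?_, ?_, ?_, ?_, ?_, ?_, ?_, ?_, ?_, ?_, ?_, ?_, ?_, ?_⟩ <;> congr 1 <;> ring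
  obtain ⟨b₁, b₂, b₃⟩ : affine (m + l + 2) (a + b) = n + b' ∧
      affine (m + l + 5 / 2) (a - b - c - d) = n + e' ∧ affine (m + l + 3) a = n + 1 := by
    simp only [hn, hb, he, ← affine_add, ← affine_one]
    refine ⟨?_, ?_, ?_⟩ <;> congr 1 <;> ring
  have hκ : (C (-1 / (2 * m + 1 / 2) : ℝ)) * (c' + d' - b' - e' - 1) = -1 := by
    rw [← hsum', C_div_mul_affine (by positivity), map_neg, map_one]
  have hσ : (C (1 / (2 * m + 3 / 2) : ℝ)) * (c' + d' - b' - e') = 1 := by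
    rw [← hsum, C_div_mul_affine (by positivity), map_one]
  have hden : (n - b') * (n - e') * ((n + c') * (n + d')) ≠ 0 := by
    rw [← a₁, ← a₂, ← a₃, ← a₄]
    refine mul_ne_zero (mul_ne_zero ?_ ?_) (mul_ne_zero ?_ ?_) <;>
      exact affine_ne_zero (by positivity) _
  have htelescope := certificate_telescope hκ hσ hden (kernelHead_succ_mul m hb he hc hd)
    (by rw [← a₁, ← a₂, ← a₃, ← a₄, ← a₇, ← a₈, ← a₉, ← a₁₀]; exact kernelTail_succ_right m l)
    (by rw [← a₅, ← a₆, ← a₁, ← a₂, ← a₃, ← a₄, ← a₉, ← a₁₀]; exact kernelTail_succ_left m l)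
  have q₁ : (m : ℝ) + (l + 1) + 1 = m + l + 2 := by ring
  have q₂ : 2 * (m : ℝ) + (l + 1) + 2 = 2 * m + l + 3 := by ring
  have q₃ : (m : ℝ) + 1 + l + 1 = m + l + 2 := by ring
  have q₄ : 2 * ((m : ℝ) + 1) + l + 2 = 2 * m + l + 4 := by ring
  have q₅ : (m : ℝ) + (l + 1) + 2 = m + l + 3 := by ring
  have q₆ : (m : ℝ) + (l + 1) + 3 / 2 = m + l + 5 / 2 := by ring
  simp only [wzF, wzG, wzCertificate, kernel, Nat.cast_add, Nat.cast_one, q₁, q₂, q₃, q₄, q₅, q₆,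
    ← hn, ← hb, ← he, ← hc, ← hd, a₃, a₄, a₅, a₆, a₉, a₁₀, a₁₁, a₁₂, b₁, b₂, b₃]
  exact htelescope

lemma sum_wzF (L m : ℕ) :
    ∑ l ∈ range L, wzF a b c d m l =
      ∑ i ∈ range L, wzT a b c d (m + i) + ∑ i ∈ range L, wzG a b c d (m + i) (L - 1 - i) := by
  induction L generalizing m with
  | zero => simp
  | succ L ih =>
    have htail : ∑ l ∈ range L, wzF a b c d m (l + 1) =
        ∑ l ∈ range L, wzF a b c d (m + 1) l + (wzG a b c d m L - wzG a b c d m 0) := by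
      rw [← sum_range_sub, ← sum_add_distrib]
      exact sum_congr rfl fun l _ => by rw [wzF_succ, add_sub_assoc]
    have hindex (i : ℕ) : L + 1 - 1 - (i + 1) = L - 1 - i := by omega
    rw [sum_range_succ', htail, ih, sum_range_succ' (fun i => wzT a b c d (m + i)),
      sum_range_succ' (fun i => wzG a b c d (m + i) (L + 1 - 1 - i))]
    simp only [hindex, ← add_assoc, add_right_comm m 1]
    simp only [add_zero, Nat.sub_zero, Nat.add_sub_cancel, wzT]
    ring

end WZPair

section Estimates

lemma tendsto_loss_pow_div {θ : ℝ} (hθ : 0 ≤ θ) {q : ℕ} (hq : q * θ < 1) :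
    Tendsto (fun n : ℕ => loss θ n ^ q / n) atTop (𝓝 0) := by
  have hbound (n : ℕ) (hn : n ≠ 0) :
      loss θ n ^ q / n ≤ Real.exp (q * θ) * (n : ℝ) ^ (-(1 - q * θ)) := by
    have hn' : (0 : ℝ) < n := by positivity
    calc loss θ n ^ q / n = Real.exp (q * θ * harmonic n) / n := by
          rw [loss, ← Real.exp_nat_mul, mul_assoc]
      _ ≤ Real.exp (q * θ * (1 + Real.log n)) / n := by
          gcongr
          exact harmonic_le_one_add_log n
      _ = _ := by
          rw [mul_one_add, Real.exp_add, neg_sub, Real.rpow_sub_one hn'.ne',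
            Real.rpow_def_of_pos hn', mul_comm (Real.log _), mul_div_assoc]
  refine squeeze_zero' (.of_forall fun n => by have := loss_pos θ n; positivity)
    ((eventually_ne_atTop 0).mono hbound) ?_
  simpa using ((tendsto_rpow_neg_atTop (sub_pos.2 hq)).comp tendsto_natCast_atTop_atTop).const_mul
    (Real.exp (q * θ))

variable {θ k : ℝ} (N : ℕ)

lemma eventually_dominatedBy_rising (hθ : 0 < θ) (hk : 1 / 2 ≤ k) (x : ℝ) :
    ∀ᶠ r : ℝ≥0 in 𝓝[>] 0, ∀ n n', n ≤ n' →
      DominatedBy (truncSeminorm N r) (loss θ n') (rising k x n) :=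
  (eventually_mul_abs_le x hθ).mono fun _ hx n _ hn =>
    (dominatedBy_rising hk hx n).mono (loss_pos θ n) (loss_mono hθ.le hn)

lemma eventually_dominatedBy_rising_inv (hθ : 0 < θ) (hθ' : θ ≤ 1) (hk : 1 / 2 ≤ k) (x : ℝ) :
    ∀ᶠ r : ℝ≥0 in 𝓝[>] 0, ∀ n n', n ≤ n' →
      DominatedBy (truncSeminorm N r) (loss θ n') (rising k x n)⁻¹ :=
  (eventually_mul_abs_le x hθ).mono fun _ hx n _ hn =>
    (dominatedBy_rising_inv hk hθ' hx n).mono (loss_pos θ n) (loss_mono hθ.le hn)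

lemma eventually_truncSeminorm_affine_le (x : ℝ) :
    ∀ᶠ r : ℝ≥0 in 𝓝[>] 0, ∀ k : ℝ, truncSeminorm N r (affine k x) ≤ |k| + 1 :=
  (eventually_mul_abs_le x one_pos).mono fun _ hx _ =>
    (truncSeminorm_affine_le _ _).trans (by linarith)

end Estimates

section KernelEstimates
variable (a b c d : ℝ)

lemma sq_half_rising_mul_factorial_le (m : ℕ) :
    (ascPochhammer ℝ m).eval (1 / 2) ^ 2 * ((2 * m).factorial : ℝ) ≤
      (m.factorial : ℝ) ^ 2 * (ascPochhammer ℝ (2 * m)).eval (1 / 2) := by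
  induction m with
  | zero => simp
  | succ m ih =>
    rw [Nat.mul_succ, Nat.factorial_succ, Nat.factorial_succ, Nat.factorial_succ]
    simp only [ascPochhammer_succ_eval]
    push_cast
    have hstep : (1 / 2 + m : ℝ) ^ 2 * ((2 * m + 1 + 1) * (2 * m + 1)) ≤
        (m + 1) ^ 2 * ((1 / 2 + 2 * m) * (1 / 2 + (2 * m + 1))) := by
      have : (0 : ℝ) ≤ m := m.cast_nonneg
      nlinarith [pow_nonneg this 3, pow_nonneg this 2]
    have hpos : 0 ≤ (m.factorial : ℝ) ^ 2 * (ascPochhammer ℝ (2 * m)).eval (1 / 2) :=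
      mul_nonneg (by positivity) (ascPochhammer_pos _ _ one_half_pos).le
    linarith [mul_le_mul ih hstep (by positivity) hpos]

lemma factorial_mul_two_pow_le (m l : ℕ) :
    m.factorial * m.factorial * l.factorial * (m + l + 1) * 2 ^ m ≤ (2 * m + l + 1).factorial := by
  induction m with
  | zero => simp [Nat.factorial_succ, mul_comm]
  | succ m ih =>
    rw [show 2 * (m + 1) + l + 1 = 2 * m + l + 1 + 1 + 1 by ring, Nat.factorial_succ (_ + 1),
      Nat.factorial_succ (2 * m + l + 1), Nat.factorial_succ m, pow_succ]
    have hstep : (m + 1) * (m + 1) * (m + 1 + l + 1) * 2 ≤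
        (2 * m + l + 1 + 1 + 1) * (2 * m + l + 1 + 1) * (m + l + 1) :=
      calc (m + 1) * (m + 1) * (m + 1 + l + 1) * 2
          = (m + 1 + l + 1) * (2 * m + 2) * (m + 1) := by ring
        _ ≤ _ := Nat.mul_le_mul (Nat.mul_le_mul (by omega) (by omega)) (by omega)
    refine Nat.le_of_mul_le_mul_left ?_ (Nat.succ_pos (m + l))
    nlinarith [Nat.mul_le_mul ih hstep]

lemma constantCoeff_rising_one (x : ℝ) (n : ℕ) :
    constantCoeff (rising 1 x n) = n.factorial := by
  rw [constantCoeff_rising, ascPochhammer_eval_one]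

lemma constantCoeff_kernelHead_le (m : ℕ) :
    constantCoeff (kernelHead b c d m) ≤ (m.factorial : ℝ) ^ 4 := by
  have hpos := ascPochhammer_pos (2 * m) (1 / 2 : ℝ) one_half_pos
  simp only [kernelHead, map_mul, constantCoeff_inv, constantCoeff_rising_one,
    constantCoeff_rising (1 / 2)]
  rw [← div_eq_mul_inv, div_le_iff₀ hpos]
  linarith [mul_le_mul_of_nonneg_left (sq_half_rising_mul_factorial_le m)
    (sq_nonneg (m.factorial : ℝ))]

lemma constantCoeff_kernelTail (m l : ℕ) :
    constantCoeff (kernelTail a b c d m l) =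
      (l.factorial / (2 * m + l + 2).factorial : ℝ) ^ 2 / (m + l + 1) := by
  have hpos := ascPochhammer_pos (m + l + 1) (1 / 2 : ℝ) one_half_pos
  simp only [kernelTail, map_mul, constantCoeff_inv, constantCoeff_rising_one,
    constantCoeff_rising (1 / 2)]
  rw [Nat.factorial_succ (m + l)]
  field_simp
  push_cast
  ring

lemma constantCoeff_kernel_le (m l : ℕ) :
    constantCoeff (kernel a b c d m l) ≤ (1 / 4) ^ m / (m + l + 1 : ℝ) ^ 5 := by
  have hfac : (m.factorial : ℝ) ^ 2 * l.factorial * ((m + l + 1) ^ 2 * 2 ^ m) ≤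
      (2 * m + l + 2).factorial := by
    rw [Nat.factorial_succ]
    have := factorial_mul_two_pow_le m l
    norm_cast
    nlinarith [Nat.mul_le_mul (show m + l + 1 ≤ 2 * m + l + 1 + 1 by omega) this]
  calc constantCoeff (kernel a b c d m l)
      ≤ (m.factorial : ℝ) ^ 4 *
          ((l.factorial / (2 * m + l + 2).factorial : ℝ) ^ 2 / (m + l + 1)) := by
        rw [kernel, map_mul, constantCoeff_kernelTail]
        gcongr
        exact constantCoeff_kernelHead_le b c d m
    _ = ((m.factorial : ℝ) ^ 2 * l.factorial / (2 * m + l + 2).factorial) ^ 2 / (m + l + 1) := by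
        ring
    _ ≤ (1 / ((m + l + 1) ^ 2 * 2 ^ m)) ^ 2 / (m + l + 1) := by
        gcongr ?_ ^ 2 / _
        rw [div_le_div_iff₀ (by positivity) (by positivity)]
        linarith
    _ = (1 / 4) ^ m / (m + l + 1 : ℝ) ^ 5 := by
        have : (1 / 4 : ℝ) ^ m = (1 / 2 ^ m) ^ 2 := by
          rw [← one_div_pow, ← pow_mul, mul_comm, pow_mul]; norm_num
        rw [this]
        field_simp

lemma eventually_dominatedBy_kernel (N : ℕ) {θ : ℝ} (hθ : 0 < θ) (hθ' : θ ≤ 1) :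
    ∀ᶠ r : ℝ≥0 in 𝓝[>] 0, ∀ m l,
      DominatedBy (truncSeminorm N r) (loss θ (2 * (m + l + 1)) ^ 14) (kernel a b c d m l) := by
  have num {k : ℝ} (hk : 1 / 2 ≤ k) (x : ℝ) := eventually_dominatedBy_rising N hθ hk x
  have den {k : ℝ} (hk : 1 / 2 ≤ k) (x : ℝ) := eventually_dominatedBy_rising_inv N hθ hθ' hk x
  have hone : (1 / 2 : ℝ) ≤ 1 := by norm_num
  filter_upwards [num hone (-c - b), num hone (-d - b), num le_rfl (b + d), num le_rfl (b + c),
    num hone (-c - d), den le_rfl 0, num hone (a + b), num le_rfl (a - b - c - d), num hone (a + c),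
    num hone (a + d), den hone (a - b), den le_rfl (a + b + c + d), den hone (a - c),
    den hone (a - d)] with r h₁ h₂ h₃ h₄ h₅ h₆ t₁ t₂ t₃ t₄ t₅ t₆ t₇ t₈ m l
  set n := 2 * (m + l + 1)
  have hhead : DominatedBy (truncSeminorm N r) (loss θ n ^ 6) (kernelHead b c d m) := by
    rw [show loss θ n ^ 6 = loss θ n * loss θ n * loss θ n * loss θ n * loss θ n * loss θ n by ring]
    exact (((((h₁ m n (by omega)).mul (h₂ m n (by omega))).mul (h₃ m n (by omega))).mul
      (h₄ m n (by omega))).mul (h₅ (2 * m) n (by omega))).mul (h₆ (2 * m) n (by omega))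
  have htail : DominatedBy (truncSeminorm N r) (loss θ n ^ 8) (kernelTail a b c d m l) := by
    rw [show loss θ n ^ 8 = loss θ n * loss θ n * loss θ n * loss θ n * loss θ n * loss θ n *
      loss θ n * loss θ n by ring]
    exact (((((((t₁ _ n (by omega)).mul (t₂ _ n (by omega))).mul (t₃ _ n (by omega))).mul
      (t₄ _ n (by omega))).mul (t₅ _ n (by omega))).mul (t₆ _ n (by omega))).mul
      (t₇ _ n (by omega))).mul (t₈ _ n (by omega))
  simpa only [← pow_add] using! hhead.mul htail

lemma map_certConst_le {R : Type*} [CommRing R] (p : RingSeminorm R) {κ σ b e c d : R} {M : ℝ}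
    (hM : 2 ≤ M) (hκ : p κ ≤ 2) (hσ : p σ ≤ 1) (hb : p b ≤ 2) (he : p e ≤ 2) (hc : p c ≤ M)
    (hd : p d ≤ M) : p (certConst κ σ b e c d) ≤ 30 * M ^ 2 := by
  rw [certConst, pow_two, pow_two]
  grw [map_mul_le_mul, map_add_le_add, map_add_le_add, map_mul_le_mul p c c, map_mul_le_mul p d d,
    map_mul_le_mul p κ, map_add_le_add, map_sub_le_add, map_sub_le_add, map_add_le_add,
    map_mul_le_mul p b e, map_mul_le_mul p c d, map_mul_le_mul p (b + e), map_mul_le_mul p (c * d),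
    map_mul_le_mul p (b * e), map_mul_le_mul p b e, map_mul_le_mul p c d, map_add_le_add p c d,
    map_add_le_add p b e, hκ, hσ, hb, he, hc, hd]
  nlinarith

lemma eventually_truncSeminorm_wzCertificate_le (N : ℕ) :
    ∀ᶠ r : ℝ≥0 in 𝓝[>] 0, ∀ m l,
      truncSeminorm N r (wzCertificate a b c d m l) ≤ 200 * (m + l + 1 : ℝ) ^ 2 := by
  have haffine (x : ℝ) := eventually_truncSeminorm_affine_le N x
  filter_upwards [haffine a, haffine b, haffine (-b - c - d), haffine (-c), haffine (-d)]
    with r ha hb he hc hd m l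
  have hκ : truncSeminorm N r (C (-1 / (2 * m + 1 / 2) : ℝ)) ≤ 2 := by
    grw [truncSeminorm_C_le, Real.norm_eq_abs, abs_div, abs_neg, abs_one,
      abs_of_pos (by positivity), div_le_iff₀ (by positivity)]
    linarith [m.cast_nonneg (α := ℝ)]
  have hσ : truncSeminorm N r (C (1 / (2 * m + 3 / 2) : ℝ)) ≤ 1 := by
    grw [truncSeminorm_C_le, Real.norm_of_nonneg (by positivity), div_le_iff₀ (by positivity)]
    linarith [m.cast_nonneg (α := ℝ)]
  have := m.cast_nonneg (α := ℝ)
  have := l.cast_nonneg (α := ℝ)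
  have hconst := map_certConst_le (truncSeminorm N r) (M := 2 * (m + l + 1)) (by linarith) hκ hσ
    ((hb 0).trans (by norm_num)) ((he (1 / 2)).trans (by norm_num [abs_of_pos]))
    ((hc (m + 1)).trans (by rw [abs_of_pos (by positivity)]; linarith))
    ((hd (m + 1)).trans (by rw [abs_of_pos (by positivity)]; linarith))
  rw [wzCertificate]
  grw [map_add_le_add, map_mul_le_mul, map_mul_le_mul, hκ, ha, ha, hconst,
    abs_of_pos (by positivity), abs_of_pos (by positivity)]
  nlinarith

lemma eventually_truncSeminorm_wzG_le (N : ℕ) {θ : ℝ} (hθ : 0 < θ) (hθ' : θ ≤ 1) :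
    ∀ᶠ r : ℝ≥0 in 𝓝[>] 0, ∀ m l, truncSeminorm N r (wzG a b c d m l) ≤
      1200 * (loss θ (2 * (m + l + 1)) ^ 14 / (m + l + 1)) * (1 / 4) ^ m := by
  filter_upwards [eventually_dominatedBy_kernel a b c d N hθ hθ',
    eventually_truncSeminorm_wzCertificate_le a b c d N,
    eventually_truncSeminorm_affine_le N (a + b),
    eventually_truncSeminorm_affine_le N (a - b - c - d)] with r hkernel hcert hab habcd m l
  set L : ℝ := m + l + 1 with hL
  have hL1 : 1 ≤ L := by rw [hL]; linarith [m.cast_nonneg (α := ℝ), l.cast_nonneg (α := ℝ)]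
  set Λ := loss θ (2 * (m + l + 1)) ^ 14
  have hΛ : 0 ≤ Λ := pow_nonneg (loss_pos θ _).le 14
  have hkernel' : truncSeminorm N r (kernel a b c d m l) ≤ Λ * ((1 / 4) ^ m / L ^ 5) :=
    (hkernel m l).trans (mul_le_mul_of_nonneg_left (constantCoeff_kernel_le a b c d m l) hΛ)
  calc truncSeminorm N r (wzG a b c d m l)
      ≤ Λ * ((1 / 4) ^ m / L ^ 5) * (200 * L ^ 2) * (L + 1) * (L + 1 / 2 + 1) := by
        rw [wzG]
        grw [map_mul_le_mul, map_mul_le_mul, map_mul_le_mul, hcert, hab, habcd, hkernel',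
          abs_of_pos (by positivity), abs_of_pos (by positivity), hL]
        exact (congrArg _ (by ring)).le
    _ ≤ Λ * ((1 / 4) ^ m / L ^ 5) * (200 * L ^ 2) * (2 * L) * (3 * L) := by
        gcongr <;> linarith
    _ = _ := by field_simp; ring

lemma tendsto_coeff_sum_wzF_sub_sum_wzT (j : ℕ) :
    Tendsto (fun L => coeff j (∑ l ∈ range L, wzF a b c d 0 l - ∑ m ∈ range L, wzT a b c d m))
      atTop (𝓝 0) := by
  have hθ : (0 : ℝ) < 1 / 28 := by norm_num
  obtain ⟨r, hr, hG⟩ : ∃ r : ℝ≥0, 0 < r ∧ ∀ m l, truncSeminorm (j + 1) r (wzG a b c d m l) ≤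
      1200 * (loss (1 / 28) (2 * (m + l + 1)) ^ 14 / (m + l + 1)) * (1 / 4) ^ m :=
    (eventually_mem_nhdsWithin.and
      (eventually_truncSeminorm_wzG_le a b c d (j + 1) hθ (by norm_num))).exists
  refine tendsto_coeff_of_truncSeminorm j.lt_succ_self hr ?_
  set Λ : ℕ → ℝ := fun n => loss (1 / 28) n ^ 14 / n with hΛ
  have hlim : Tendsto (fun L : ℕ => 3200 * Λ (2 * L)) atTop (𝓝 0) := by
    have hΛ0 : Tendsto Λ atTop (𝓝 0) := tendsto_loss_pow_div hθ.le (by norm_num)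
    simpa only [mul_zero] using! (hΛ0.comp (tendsto_id.const_mul_atTop' two_pos)).const_mul 3200
  refine squeeze_zero (fun L => apply_nonneg _ _) (fun L => ?_) hlim
  have hsum : ∑ m ∈ range L, (1 / 4 : ℝ) ^ m ≤ 4 / 3 :=
    ((summable_geometric_of_lt_one (by norm_num) (by norm_num)).sum_le_tsum _
      fun _ _ => by positivity).trans_eq (by rw [tsum_geometric_of_lt_one] <;> norm_num)
  have hwz := sum_wzF (a := a) (b := b) (c := c) (d := d) L 0
  simp only [zero_add] at hwz
  rw [hwz, add_sub_cancel_left]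
  calc truncSeminorm (j + 1) r (∑ i ∈ range L, wzG a b c d i (L - 1 - i))
      ≤ ∑ i ∈ range L, truncSeminorm (j + 1) r (wzG a b c d i (L - 1 - i)) := by
        exact le_sum_of_subadditive _ (map_zero _).le (map_add_le_add _) _ _
    _ ≤ ∑ i ∈ range L, 2400 * Λ (2 * L) * (1 / 4) ^ i := by
        refine sum_le_sum fun i hi => ?_
        have hi' : i + (L - 1 - i) + 1 = L := by have := mem_range.1 hi; omega
        have hcast : (i : ℝ) + (L - 1 - i : ℕ) + 1 = L := mod_cast hi'
        refine (hG i (L - 1 - i)).trans_eq ?_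
        rw [hi', hcast, hΛ]
        push_cast
        field_simp
        ring
    _ ≤ 3200 * Λ (2 * L) := by
        rw [← mul_sum]
        have : 0 ≤ Λ (2 * L) := by have := loss_pos (1 / 28) (2 * L); positivity
        nlinarith

end KernelEstimates

section Dougall

lemma dougall_telescope {R : Type*} [CommRing R] [IsDomain R] {A c d e j I u v w : R}
    (hI : (1 + A - c - d - e) * I = 1)
    (hden : (1 + A - c + j) * (1 + A - d + j) * (1 + A - e + j) ≠ 0)
    (hv : v * ((j + 1) * ((1 + A - c + j) * (1 + A - d + j) * (1 + A - e + j))) =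
      u * ((A + j) * (c + j) * (d + j) * (e + j)))
    (hw : w * ((1 + A - c + j) * (1 + A - d + j) * (1 + A - e + j)) =
      u * ((A + j) * (1 + A - c - d) * (1 + A - c - e) * (1 + A - d - e)) * I) :
    (A + 2 * j) * u - (A + 2 * j + 1) * w =
      -(I * ((j + 1) * (j + 1 + (1 + 2 * A - c - d - e))) * v) -
        -(I * (j * (j + (1 + 2 * A - c - d - e))) * u) := by
  refine mul_right_cancel₀ hden ?_
  linear_combination -(A + 2 * j + 1) * hw + I * (j + 1 + (1 + 2 * A - c - d - e)) * hv -
    (A + 2 * j) * u * ((1 + A - c + j) * (1 + A - d + j) * (1 + A - e + j)) * hI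

lemma dougall_telescope_zero {R : Type*} [CommRing R] {A c d e I₀ I₁ I₂ I₃ : R}
    (h₀ : (1 + A - c - d - e) * I₀ = 1) (h₁ : (1 + A - c) * I₁ = 1) (h₂ : (1 + A - d) * I₂ = 1)
    (h₃ : (1 + A - e) * I₃ = 1) :
    1 - (1 + A) * (1 + A - c - d) * (1 + A - d - e) * (1 + A - c - e) * I₁ * I₂ * I₃ * I₀ =
      c * d * -(I₀ * (1 + (1 + 2 * A - c - d - e)) * (e * I₁ * I₂ * I₃)) := by
  have hmul : (1 + A - c) * I₁ * ((1 + A - d) * I₂) * ((1 + A - e) * I₃) *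
      ((1 + A - c - d - e) * I₀) = 1 := by
    rw [h₀, h₁, h₂, h₃]; ring
  linear_combination -hmul

lemma affine_mul_rising_succ (k x : ℝ) (n : ℕ) :
    affine k x * rising (k + 1) x n = rising k x (n + 1) := by
  induction n with
  | zero => simp [rising_succ]
  | succ n ih =>
    rw [rising_succ, ← mul_assoc, ih, rising_succ k x (n + 1)]
    push_cast
    ring_nf

variable (a x y : ℝ)

/-- The factor common to `dougallTerm` and its telescoping certificate `dougallCert`. -/
noncomputable def dougallFactor (i l : ℕ) : ℝ⟦X⟧ :=
  rising (i + 1) (2 * a) l * rising 1 (a + x) l * rising 1 (a + y) l *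
    rising (1 / 2) (-x - y) (l + 1) * (rising 1 0 (l + 1))⁻¹ * (rising (i + 1) (a - x) (l + 1))⁻¹ *
    (rising (i + 1) (a - y) (l + 1))⁻¹ * (rising (i + 1 / 2) (2 * a + x + y) (l + 1))⁻¹

/-- The terms of Dougall's very well poised `₅F₄` series with parameters `i + 2 a X`, `(a + x) X`,
`(a + y) X`, `1 / 2 - (x + y) X`, without the first term, and divided by
`(a + x) X * (a + y) X`. -/
noncomputable def dougallTerm (i l : ℕ) : ℝ⟦X⟧ :=
  affine (i + 2 * (l + 1)) (2 * a) * dougallFactor a x y i l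

/-- The certificate which telescopes `dougallTerm i - dougallRatio i * dougallTerm (i + 1)`. -/
noncomputable def dougallCert (i l : ℕ) : ℝ⟦X⟧ :=
  -((affine (i + 1 / 2) 0)⁻¹ * (affine (l + 1) 0 * affine (l + 2 * i + 3 / 2) (2 * a)) *
    dougallFactor a x y i l)

/-- The ratio of the sums of two Dougall series with consecutive `i`. -/
noncomputable def dougallRatio (i : ℕ) : ℝ⟦X⟧ :=
  affine (i + 1) (2 * a) * affine (i + 1) (-x - y) * affine (i + 1 / 2) (a + x) *
    affine (i + 1 / 2) (a + y) * (affine (i + 1) (a - x))⁻¹ * (affine (i + 1) (a - y))⁻¹ *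
    (affine (i + 1 / 2) (2 * a + x + y))⁻¹ * (affine (i + 1 / 2) 0)⁻¹

/-- The partial products of Dougall's product formula, i.e. of `dougallRatio`. -/
noncomputable def dougallProd (n : ℕ) : ℝ⟦X⟧ :=
  rising 1 (2 * a) n * rising 1 (-x - y) n * rising (1 / 2) (a + x) n * rising (1 / 2) (a + y) n *
    (rising 1 (a - x) n)⁻¹ * (rising 1 (a - y) n)⁻¹ * (rising (1 / 2) (2 * a + x + y) n)⁻¹ *
    (rising (1 / 2) 0 n)⁻¹

variable {a x y}

lemma dougallProd_succ (n : ℕ) :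
    dougallProd a x y (n + 1) = dougallProd a x y n * dougallRatio a x y n := by
  simp only [dougallProd, dougallRatio, rising_succ, PowerSeries.mul_inv_rev, add_comm (n : ℝ)]
  ring

lemma dougallFactor_succ_right (i l : ℕ) :
    dougallFactor a x y i (l + 1) * (affine (l + 2) 0 * (affine (i + l + 2) (a - x) *
        affine (i + l + 2) (a - y) * affine (i + l + 3 / 2) (2 * a + x + y))) =
      dougallFactor a x y i l * (affine (i + l + 1) (2 * a) * affine (l + 1) (a + x) *
        affine (l + 1) (a + y) * affine (l + 3 / 2) (-x - y)) := by
  simp only [dougallFactor]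
  rw [rising_succ_eq (k' := i + l + 1) (2 * a) (by ring),
    rising_succ_eq (k' := l + 1) (a + x) (by ring), rising_succ_eq (k' := l + 1) (a + y) (by ring),
    rising_succ_eq (k' := l + 3 / 2) (n := l + 1) (-x - y) (by push_cast; ring),
    inv_rising_eq (k' := l + 2) one_pos 0 (n := l + 1) (by push_cast; ring),
    inv_rising_eq (k' := i + l + 2) (by positivity) (a - x) (n := l + 1) (by push_cast; ring),
    inv_rising_eq (k' := i + l + 2) (by positivity) (a - y) (n := l + 1) (by push_cast; ring),
    inv_rising_eq (k' := i + l + 3 / 2) (by positivity) (2 * a + x + y) (n := l + 1)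
      (by push_cast; ring)]
  ring

lemma dougallFactor_succ_left (i l : ℕ) :
    dougallRatio a x y i * dougallFactor a x y (i + 1) l * (affine (i + l + 2) (a - x) *
        affine (i + l + 2) (a - y) * affine (i + l + 3 / 2) (2 * a + x + y)) =
      dougallFactor a x y i l * (affine (i + l + 1) (2 * a) * affine (i + 1) (-x - y) *
        affine (i + 1 / 2) (a + x) * affine (i + 1 / 2) (a + y)) * (affine (i + 1 / 2) 0)⁻¹ := by
  have shift (k z : ℝ) (n : ℕ) :
      (rising k z (n + 1))⁻¹ = (affine k z)⁻¹ * (rising (k + 1) z n)⁻¹ := by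
    rw [← affine_mul_rising_succ, PowerSeries.mul_inv_rev, mul_comm]
  have hk : (i + 1 : ℝ) + 1 / 2 = i + 1 / 2 + 1 := by ring
  have hrising : affine (i + 1) (2 * a) * rising (i + 1 + 1) (2 * a) l =
      rising (i + 1) (2 * a) l * affine (i + l + 1) (2 * a) := by
    rw [affine_mul_rising_succ, rising_succ_eq (k' := i + l + 1) (2 * a) (by ring)]
  simp only [dougallRatio, dougallFactor, Nat.cast_add, Nat.cast_one, hk]
  rw [inv_rising_eq (k := i + 1) (k' := i + l + 2) (by positivity) (a - x) (n := l + 1)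
      (by push_cast; ring),
    inv_rising_eq (k := i + 1) (k' := i + l + 2) (by positivity) (a - y) (n := l + 1)
      (by push_cast; ring),
    inv_rising_eq (k := i + 1 / 2) (k' := i + l + 3 / 2) (by positivity) (2 * a + x + y)
      (n := l + 1) (by push_cast; ring), shift (i + 1), shift (i + 1), shift (i + 1 / 2)]
  linear_combination (affine (i + 1) (-x - y) * affine (i + 1 / 2) (a + x) *
    affine (i + 1 / 2) (a + y) * (affine (i + 1) (a - x))⁻¹ * (affine (i + 1) (a - y))⁻¹ *
    (affine (i + 1 / 2) (2 * a + x + y))⁻¹ * (affine (i + 1 / 2) 0)⁻¹ * rising 1 (a + x) l *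
    rising 1 (a + y) l * rising (1 / 2) (-x - y) (l + 1) * (rising 1 0 (l + 1))⁻¹ *
    (rising (i + 1 + 1) (a - x) (l + 1))⁻¹ * (rising (i + 1 + 1) (a - y) (l + 1))⁻¹ *
    (rising (i + 1 / 2 + 1) (2 * a + x + y) (l + 1))⁻¹ * affine (i + l + 2) (a - x) *
    affine (i + l + 2) (a - y) * affine (i + l + 3 / 2) (2 * a + x + y)) * hrising

lemma dougallTerm_sub (i l : ℕ) :
    dougallTerm a x y i l - dougallRatio a x y i * dougallTerm a x y (i + 1) l =
      dougallCert a x y i (l + 1) - dougallCert a x y i l := by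
  set A := affine i (2 * a) with hA
  set c := affine 0 (a + x) with hc
  set d := affine 0 (a + y) with hd
  set e := affine (1 / 2) (-x - y) with he
  set j := affine (l + 1) 0 with hj
  obtain ⟨h₀, h₁, h₂, h₃, h₄, h₅, h₆, h₇⟩ :
      affine (i + 1 / 2) 0 = 1 + A - c - d - e ∧ affine (i + l + 2) (a - x) = 1 + A - c + j ∧
      affine (i + l + 2) (a - y) = 1 + A - d + j ∧
      affine (i + l + 3 / 2) (2 * a + x + y) = 1 + A - e + j ∧
      affine (l + 2) 0 = j + 1 ∧ affine (i + l + 1) (2 * a) = A + j ∧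
      affine (l + 1) (a + x) = c + j ∧ affine (l + 1) (a + y) = d + j := by
    simp only [hA, hc, hd, he, hj, ← affine_add, ← affine_sub, ← affine_one]
    refine ⟨?_, ?_, ?_, ?_, ?_, ?_, ?_, ?_⟩ <;> congr 1 <;> ring
  obtain ⟨g₀, g₁, g₂, g₃, g₄, g₅, g₆, g₇⟩ :
      affine (l + 3 / 2) (-x - y) = e + j ∧ affine (i + 1) (-x - y) = 1 + A - c - d ∧
      affine (i + 1 / 2) (a + x) = 1 + A - d - e ∧ affine (i + 1 / 2) (a + y) = 1 + A - c - e ∧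
      affine (l + 2 * i + 3 / 2) (2 * a) = j + (1 + 2 * A - c - d - e) ∧
      affine (l + 1 + 2 * i + 3 / 2) (2 * a) = j + 1 + (1 + 2 * A - c - d - e) ∧
      affine (i + 2 * (l + 1)) (2 * a) = A + 2 * j ∧
      affine (i + 1 + 2 * (l + 1)) (2 * a) = A + 2 * j + 1 := by
    simp only [two_mul, hA, hc, hd, he, hj, ← affine_add, ← affine_sub, ← affine_one]
    refine ⟨?_, ?_, ?_, ?_, ?_, ?_, ?_, ?_⟩ <;> congr 1 <;> ring
  have htelescope := dougall_telescope (A := A) (c := c) (d := d) (e := e) (j := j)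
    (I := (affine (i + 1 / 2) 0)⁻¹) (u := dougallFactor a x y i l)
    (v := dougallFactor a x y i (l + 1))
    (w := dougallRatio a x y i * dougallFactor a x y (i + 1) l)
    (by rw [← h₀]; exact affine_mul_inv (by positivity) 0)
    (by
      rw [← h₁, ← h₂, ← h₃]
      exact mul_ne_zero (mul_ne_zero (affine_ne_zero (by positivity) _)
        (affine_ne_zero (by positivity) _)) (affine_ne_zero (by positivity) _))
    (by rw [← h₁, ← h₂, ← h₃, ← h₄, ← h₅, ← h₆, ← h₇, ← g₀]; exact dougallFactor_succ_right i l)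
    (by rw [← h₁, ← h₂, ← h₃, ← h₅, ← g₁, ← g₂, ← g₃, dougallFactor_succ_left]; ring)
  have hl : (l : ℝ) + 1 + 1 = l + 2 := by ring
  simp only [dougallTerm, dougallCert, Nat.cast_add, Nat.cast_one, hl, h₄, g₄, g₅, g₆, g₇]
  linear_combination htelescope

lemma one_sub_dougallRatio (i : ℕ) : 1 - dougallRatio a x y i =
    affine 0 (a + x) * affine 0 (a + y) * dougallCert a x y i 0 := by
  set A := affine i (2 * a) with hA
  set c := affine 0 (a + x) with hc
  set d := affine 0 (a + y) with hd
  set e := affine (1 / 2) (-x - y) with he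
  obtain ⟨h₀, h₁, h₂, h₃, h₄, h₅, h₆, h₇, h₈⟩ :
      affine (i + 1 / 2) 0 = 1 + A - c - d - e ∧ affine (i + 1) (a - x) = 1 + A - c ∧
      affine (i + 1) (a - y) = 1 + A - d ∧ affine (i + 1 / 2) (2 * a + x + y) = 1 + A - e ∧
      affine (i + 1) (2 * a) = 1 + A ∧ affine (i + 1) (-x - y) = 1 + A - c - d ∧
      affine (i + 1 / 2) (a + x) = 1 + A - d - e ∧ affine (i + 1 / 2) (a + y) = 1 + A - c - e ∧
      affine (2 * i + 3 / 2) (2 * a) =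
        1 + (1 + 2 * A - c - d - e) := by
    simp only [two_mul, hA, hc, hd, he, ← affine_add, ← affine_sub, ← affine_one]
    refine ⟨?_, ?_, ?_, ?_, ?_, ?_, ?_, ?_, ?_⟩ <;> congr 1 <;> ring
  have inv₁ : (1 + A - c) * (affine (i + 1) (a - x))⁻¹ = 1 :=
    h₁ ▸ affine_mul_inv (by positivity) _
  have inv₂ : (1 + A - d) * (affine (i + 1) (a - y))⁻¹ = 1 :=
    h₂ ▸ affine_mul_inv (by positivity) _
  have inv₃ : (1 + A - e) * (affine (i + 1 / 2) (2 * a + x + y))⁻¹ = 1 :=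
    h₃ ▸ affine_mul_inv (by positivity) _
  have hcert : dougallCert a x y i 0 = -((affine (i + 1 / 2) 0)⁻¹ * (1 + (1 + 2 * A - c - d - e)) *
      (e * (affine (i + 1) (a - x))⁻¹ * (affine (i + 1) (a - y))⁻¹ *
        (affine (i + 1 / 2) (2 * a + x + y))⁻¹)) := by
    simp [dougallCert, dougallFactor, rising_succ, affine_one, h₈, he]
  have hratio : dougallRatio a x y i = (1 + A) * (1 + A - c - d) * (1 + A - d - e) *
      (1 + A - c - e) * (affine (i + 1) (a - x))⁻¹ * (affine (i + 1) (a - y))⁻¹ *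
      (affine (i + 1 / 2) (2 * a + x + y))⁻¹ * (affine (i + 1 / 2) 0)⁻¹ := by
    simp only [dougallRatio, h₄, h₅, h₆, h₇]
  have inv₀ : (1 + A - c - d - e) * (affine (i + 1 / 2) 0)⁻¹ = 1 :=
    h₀ ▸ affine_mul_inv (by positivity) _
  rw [hcert, hratio]
  exact dougall_telescope_zero inv₀ inv₁ inv₂ inv₃

lemma one_add_sum_dougallTerm (n i : ℕ) :
    1 + affine 0 (a + x) * affine 0 (a + y) * ∑ l ∈ range n, dougallTerm a x y i l =
      dougallRatio a x y i * (1 + affine 0 (a + x) * affine 0 (a + y) *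
        ∑ l ∈ range n, dougallTerm a x y (i + 1) l) +
      affine 0 (a + x) * affine 0 (a + y) * dougallCert a x y i n := by
  have hsum : ∑ l ∈ range n, dougallTerm a x y i l -
      dougallRatio a x y i * ∑ l ∈ range n, dougallTerm a x y (i + 1) l =
        dougallCert a x y i n - dougallCert a x y i 0 := by
    rw [mul_sum, ← sum_sub_distrib, ← sum_range_sub]
    exact sum_congr rfl fun l _ => dougallTerm_sub i l
  linear_combination affine 0 (a + x) * affine 0 (a + y) * hsum +
    one_sub_dougallRatio (a := a) (x := x) (y := y) i

variable (a x y) in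
/-- The error made in Dougall's product formula by truncating both sides after `n` terms. -/
noncomputable def dougallError (n : ℕ) : ℝ⟦X⟧ :=
  dougallProd a x y n * ∑ l ∈ range n, dougallTerm a x y n l +
    ∑ i ∈ range n, dougallProd a x y i * dougallCert a x y i n

lemma one_add_sum_dougallTerm_eq_dougallProd_add (n : ℕ) :
    1 + affine 0 (a + x) * affine 0 (a + y) * ∑ l ∈ range n, dougallTerm a x y 0 l =
      dougallProd a x y n + affine 0 (a + x) * affine 0 (a + y) * dougallError a x y n := by
  have hiter (m : ℕ) :
      1 + affine 0 (a + x) * affine 0 (a + y) * ∑ l ∈ range n, dougallTerm a x y 0 l =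
        dougallProd a x y m * (1 + affine 0 (a + x) * affine 0 (a + y) *
          ∑ l ∈ range n, dougallTerm a x y m l) +
        affine 0 (a + x) * affine 0 (a + y) *
          ∑ i ∈ range m, dougallProd a x y i * dougallCert a x y i n := by
    induction m with
    | zero => simp [dougallProd]
    | succ m ih =>
      rw [ih, one_add_sum_dougallTerm, dougallProd_succ, sum_range_succ]
      ring
  rw [hiter n, dougallError]
  ring

end Dougall

section DougallEstimates

lemma ascPochhammer_eval_le {k k' : ℝ} (hk : 0 < k) (h : k ≤ k') (n : ℕ) :
    (ascPochhammer ℝ n).eval k ≤ (ascPochhammer ℝ n).eval k' := by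
  induction n with
  | zero => simp
  | succ n ih =>
    simp only [ascPochhammer_succ_eval]
    have := ascPochhammer_pos n k hk
    gcongr
    exact (this.trans_le ih).le

lemma factorial_mul_constantCoeff_rising (i l : ℕ) (x : ℝ) :
    (i.factorial : ℝ) * constantCoeff (rising (i + 1) x l) = (i + l).factorial := by
  rw [constantCoeff_rising, ← Nat.cast_add_one, ascPochhammer_nat_eq_natCast_ascFactorial]
  exact_mod_cast Nat.factorial_mul_ascFactorial i l

variable (a x y : ℝ)

lemma constantCoeff_dougallFactor_le (i l : ℕ) :
    constantCoeff (dougallFactor a x y i l) ≤ 1 / ((l + 1) * (i + l + 1) ^ 2) := by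
  have hrising (z : ℝ) (l : ℕ) :
      constantCoeff (rising (i + 1) z l) = (i + l).factorial / i.factorial := by
    rw [eq_div_iff (by positivity), mul_comm, factorial_mul_constantCoeff_rising]
  have hhalf := ascPochhammer_eval_le one_half_pos (show (1 / 2 : ℝ) ≤ i + 1 / 2 by simp) (l + 1)
  have hpos := ascPochhammer_pos (l + 1) (i + 1 / 2 : ℝ) (by positivity)
  have hchoose : (i.factorial * l.factorial : ℝ) ≤ (i + l).factorial :=
    mod_cast Nat.le_of_dvd (Nat.factorial_pos _) (Nat.factorial_mul_factorial_dvd_factorial_add i l)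
  calc constantCoeff (dougallFactor a x y i l)
      = (i.factorial * l.factorial / (i + l).factorial) / ((l + 1) * (i + l + 1) ^ 2) *
          ((ascPochhammer ℝ (l + 1)).eval (1 / 2) /
            (ascPochhammer ℝ (l + 1)).eval (i + 1 / 2 : ℝ)) := by
        simp only [dougallFactor, map_mul, constantCoeff_inv, constantCoeff_rising_one, hrising,
          constantCoeff_rising (1 / 2), constantCoeff_rising (i + 1 / 2), ← add_assoc,
          Nat.factorial_succ, Nat.cast_mul, Nat.cast_add, Nat.cast_one]
        field_simp
    _ ≤ 1 / ((l + 1) * (i + l + 1) ^ 2) * 1 := by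
        have := ascPochhammer_pos (l + 1) (1 / 2 : ℝ) one_half_pos
        gcongr
        · exact div_le_one_of_le₀ hchoose (by positivity)
        · exact div_le_one_of_le₀ hhalf hpos.le
    _ = _ := mul_one _

variable (N : ℕ) {θ : ℝ}

lemma eventually_truncSeminorm_dougallFactor_le (hθ : 0 < θ) (hθ' : θ ≤ 1) :
    ∀ᶠ r : ℝ≥0 in 𝓝[>] 0, ∀ i l n, l < n →
      truncSeminorm N r (dougallFactor a x y i l) ≤
        loss θ n ^ 8 * (1 / ((l + 1) * (i + l + 1) ^ 2)) := by
  have small (z : ℝ) := eventually_mul_abs_le z hθ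
  filter_upwards [small (2 * a), small (a + x), small (a + y), small (-x - y), small 0,
    small (a - x), small (a - y), small (2 * a + x + y)] with r h₁ h₂ h₃ h₄ h₅ h₆ h₇ h₈ i l n hl
  have num {k z : ℝ} (hk : 1 / 2 ≤ k) (hz : 4 * (|z| * r) ≤ θ) {m : ℕ} (hm : m ≤ n) :
      DominatedBy (truncSeminorm N r) (loss θ n) (rising k z m) :=
    (dominatedBy_rising hk hz m).mono (loss_pos θ m) (loss_mono hθ.le hm)
  have den {k z : ℝ} (hk : 1 / 2 ≤ k) (hz : 4 * (|z| * r) ≤ θ) {m : ℕ} (hm : m ≤ n) :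
      DominatedBy (truncSeminorm N r) (loss θ n) (rising k z m)⁻¹ :=
    (dominatedBy_rising_inv hk hθ' hz m).mono (loss_pos θ m) (loss_mono hθ.le hm)
  have hone : (1 / 2 : ℝ) ≤ 1 := by norm_num
  have hi : (1 / 2 : ℝ) ≤ i + 1 := by linarith [i.cast_nonneg (α := ℝ)]
  have hi' : (1 / 2 : ℝ) ≤ i + 1 / 2 := by simp
  have hdom : DominatedBy (truncSeminorm N r) (loss θ n ^ 8) (dougallFactor a x y i l) := by
    rw [show loss θ n ^ 8 = loss θ n * loss θ n * loss θ n * loss θ n * loss θ n * loss θ n *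
      loss θ n * loss θ n by ring]
    exact (((((((num hi h₁ hl.le).mul (num hone h₂ hl.le)).mul (num hone h₃ hl.le)).mul
      (num le_rfl h₄ hl)).mul (den hone h₅ hl)).mul (den hi h₆ hl)).mul (den hi h₇ hl)).mul
      (den hi' h₈ hl)
  exact hdom.trans (mul_le_mul_of_nonneg_left (constantCoeff_dougallFactor_le a x y i l)
    (pow_nonneg (loss_pos θ n).le 8))

lemma eventually_truncSeminorm_dougallTerm_le (hθ : 0 < θ) (hθ' : θ ≤ 1) :
    ∀ᶠ r : ℝ≥0 in 𝓝[>] 0, ∀ i l n, l < n →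
      truncSeminorm N r (dougallTerm a x y i l) ≤ 3 * loss θ n ^ 8 / ((l + 1) * (i + l + 1)) := by
  filter_upwards [eventually_truncSeminorm_dougallFactor_le a x y N hθ hθ',
    eventually_truncSeminorm_affine_le N (2 * a)] with r hfactor haffine i l n hl
  calc truncSeminorm N r (dougallTerm a x y i l)
      ≤ (3 * (i + l + 1)) * (loss θ n ^ 8 * (1 / ((l + 1) * (i + l + 1) ^ 2))) := by
        rw [dougallTerm]
        grw [map_mul_le_mul, haffine, hfactor i l n hl, abs_of_nonneg (by positivity)]
        have := loss_pos θ n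
        gcongr
        linarith [i.cast_nonneg (α := ℝ), l.cast_nonneg (α := ℝ)]
    _ = _ := by field_simp

lemma eventually_truncSeminorm_dougallCert_le (hθ : 0 < θ) (hθ' : θ ≤ 1) :
    ∀ᶠ r : ℝ≥0 in 𝓝[>] 0, ∀ i l n, l < n →
      truncSeminorm N r (dougallCert a x y i l) ≤ 6 * loss θ n ^ 8 / ((i + 1) * (i + l + 1)) := by
  filter_upwards [eventually_truncSeminorm_dougallFactor_le a x y N hθ hθ',
    eventually_truncSeminorm_affine_le N (2 * a)] with r hfactor haffine i l n hl
  have hinv : truncSeminorm N r (affine (i + 1 / 2) 0)⁻¹ ≤ 2 / (i + 1) := by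
    refine (truncSeminorm_affine_inv_le ?_).trans ?_ <;> rw [abs_zero, zero_mul]
    · positivity
    rw [sub_zero, div_le_div_iff₀ (by positivity) (by positivity)]
    linarith [i.cast_nonneg (α := ℝ)]
  have hlin : truncSeminorm N r (affine (l + 1) 0) ≤ l + 1 :=
    (truncSeminorm_affine_le _ _).trans_eq (by simp [abs_of_pos, l.cast_add_one_pos])
  calc truncSeminorm N r (dougallCert a x y i l)
      ≤ 2 / (i + 1) * ((l + 1) * (3 * (i + l + 1))) *
          (loss θ n ^ 8 * (1 / ((l + 1) * (i + l + 1) ^ 2))) := by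
        rw [dougallCert, map_neg_eq_map]
        grw [map_mul_le_mul, map_mul_le_mul, map_mul_le_mul, hinv, hlin, haffine,
          hfactor i l n hl, abs_of_nonneg (by positivity)]
        have := loss_pos θ n
        gcongr
        linarith [i.cast_nonneg (α := ℝ), l.cast_nonneg (α := ℝ)]
    _ = _ := by field_simp; ring

lemma constantCoeff_dougallProd (n : ℕ) : constantCoeff (dougallProd a x y n) = 1 := by
  have := ascPochhammer_pos n (1 / 2 : ℝ) one_half_pos
  simp only [dougallProd, map_mul, constantCoeff_inv, constantCoeff_rising_one,
    constantCoeff_rising (1 / 2)]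
  field_simp

lemma eventually_truncSeminorm_dougallProd_le (hθ : 0 < θ) (hθ' : θ ≤ 1) :
    ∀ᶠ r : ℝ≥0 in 𝓝[>] 0, ∀ m n, m ≤ n →
      truncSeminorm N r (dougallProd a x y m) ≤ loss θ n ^ 8 := by
  have num {k : ℝ} (hk : 1 / 2 ≤ k) (z : ℝ) := eventually_dominatedBy_rising N hθ hk z
  have den {k : ℝ} (hk : 1 / 2 ≤ k) (z : ℝ) := eventually_dominatedBy_rising_inv N hθ hθ' hk z
  have hone : (1 / 2 : ℝ) ≤ 1 := by norm_num
  filter_upwards [num hone (2 * a), num hone (-x - y), num le_rfl (a + x), num le_rfl (a + y),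
    den hone (a - x), den hone (a - y), den le_rfl (2 * a + x + y), den le_rfl 0]
    with r h₁ h₂ h₃ h₄ h₅ h₆ h₇ h₈ m n hm
  have hdom := (((((((h₁ m n hm).mul (h₂ m n hm)).mul (h₃ m n hm)).mul (h₄ m n hm)).mul
    (h₅ m n hm)).mul (h₆ m n hm)).mul (h₇ m n hm)).mul (h₈ m n hm)
  calc truncSeminorm N r (dougallProd a x y m) ≤ _ := hdom
    _ = loss θ n ^ 8 * constantCoeff (dougallProd a x y m) := by rw [dougallProd]; ring
    _ = loss θ n ^ 8 := by rw [constantCoeff_dougallProd, mul_one]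

lemma mul_harmonic_le_loss (θ : ℝ) (n : ℕ) : θ * harmonic n ≤ loss θ n := by
  linarith [Real.add_one_le_exp (θ * harmonic n), loss.eq_1 θ n]

lemma eventually_truncSeminorm_dougallError_le (hθ : 0 < θ) (hθ' : θ ≤ 1) :
    ∀ᶠ r : ℝ≥0 in 𝓝[>] 0, ∀ n, truncSeminorm N r (dougallError a x y n) ≤
      9 * (loss θ (n + 1) ^ 16 / (n + 1)) * harmonic n := by
  filter_upwards [eventually_truncSeminorm_dougallTerm_le a x y N hθ hθ',
    eventually_truncSeminorm_dougallCert_le a x y N hθ hθ',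
    eventually_truncSeminorm_dougallProd_le a x y N hθ hθ'] with r hterm hcert hprod n
  have hΛ := loss_pos θ (n + 1)
  have hharmonic : (harmonic n : ℝ) = ∑ l ∈ range n, 1 / ((l : ℝ) + 1) := by simp [harmonic]
  have hsum₁ : truncSeminorm N r (∑ l ∈ range n, dougallTerm a x y n l) ≤
      3 * loss θ (n + 1) ^ 8 / (n + 1) * harmonic n := by
    rw [hharmonic, mul_sum]
    refine (le_sum_of_subadditive _ (map_zero _).le (map_add_le_add _) _ _).trans
      (sum_le_sum fun l hl => (hterm n l (n + 1) (by grind)).trans ?_)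
    rw [div_mul_div_comm, mul_one, mul_comm ((n : ℝ) + 1)]
    gcongr
    linarith [l.cast_nonneg (α := ℝ)]
  have hsum₂ : truncSeminorm N r (∑ i ∈ range n, dougallProd a x y i * dougallCert a x y i n) ≤
      loss θ (n + 1) ^ 8 * (6 * loss θ (n + 1) ^ 8 / (n + 1)) * harmonic n := by
    rw [hharmonic, mul_sum]
    refine (le_sum_of_subadditive _ (map_zero _).le (map_add_le_add _) _ _).trans
      (sum_le_sum fun i hi => (map_mul_le_mul _ _ _).trans ?_)
    rw [mul_assoc, div_mul_div_comm, mul_one, mul_comm ((n : ℝ) + 1)]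
    refine mul_le_mul (hprod i (n + 1) (by grind)) ((hcert i n (n + 1) n.lt_succ_self).trans ?_)
      (apply_nonneg _ _) (by positivity)
    gcongr
    linarith [i.cast_nonneg (α := ℝ)]
  rw [dougallError]
  grw [map_add_le_add, map_mul_le_mul, hprod n (n + 1) n.le_succ, hsum₁, hsum₂]
  exact le_of_eq (by ring)

lemma tendsto_coeff_dougallError (j : ℕ) :
    Tendsto (fun n => coeff j (dougallError a x y n)) atTop (𝓝 0) := by
  have hθ : (0 : ℝ) < 1 / 34 := by norm_num
  obtain ⟨r, hr, herror⟩ := (eventually_mem_nhdsWithin.and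
    (eventually_truncSeminorm_dougallError_le a x y (j + 1) hθ (by norm_num))).exists
  refine tendsto_coeff_of_truncSeminorm j.lt_succ_self hr ?_
  have hlim : Tendsto (fun n : ℕ => 306 * (loss (1 / 34) (n + 1) ^ 17 / (n + 1 : ℕ))) atTop
      (𝓝 0) := by
    simpa only [mul_zero] using! ((tendsto_loss_pow_div hθ.le (q := 17) (by norm_num)).comp
      (tendsto_add_atTop_nat 1)).const_mul 306
  refine squeeze_zero (fun n => apply_nonneg _ _) (fun n => ?_) hlim
  have hharmonic : (harmonic n : ℝ) ≤ 34 * loss (1 / 34) (n + 1) := by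
    linarith [mul_harmonic_le_loss (1 / 34) n, loss_mono hθ.le n.le_succ]
  have hΛ := loss_pos (1 / 34) (n + 1)
  grw [herror, hharmonic]
  refine le_of_eq ?_
  push_cast
  ring

end DougallEstimates

section ClosedForm

lemma hasSum_zeta {j : ℕ} (hj : 2 ≤ j) : HasSum (fun n : ℕ => 1 / ((n : ℝ) + 1) ^ j) (zeta j) := by
  have h := (summable_nat_add_iff 1).mpr (Real.summable_one_div_nat_pow.mpr (show 1 < j by lia))
  exact Summable.hasSum (by simpa only [Nat.cast_add, Nat.cast_one] using h)

lemma tendsto_powerSum_one {j : ℕ} (hj : 2 ≤ j) :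
    Tendsto (powerSum 1 j) atTop (𝓝 (zeta j)) := by
  refine (hasSum_zeta hj).tendsto_sum_nat.congr fun n => ?_
  simp only [powerSum, add_comm (1 : ℝ)]

lemma powerSum_one_two_mul (j n : ℕ) :
    2 ^ j * powerSum 1 j (2 * n) = powerSum 1 j n + powerSum (1 / 2) j n := by
  have hscale (k : ℝ) : 2 ^ j * (1 / (2 * k) ^ j) = 1 / k ^ j := by
    rw [mul_pow]
    field_simp
  induction n with
  | zero => simp [powerSum]
  | succ n ih =>
    simp only [powerSum] at ih ⊢
    rw [mul_add_one, sum_range_succ, sum_range_succ, sum_range_succ, sum_range_succ, mul_add,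
      mul_add, ih, ← hscale (1 + n), ← hscale (1 / 2 + n)]
    push_cast
    ring_nf

lemma tendsto_powerSum_half {j : ℕ} (hj : 2 ≤ j) :
    Tendsto (powerSum (1 / 2) j) atTop (𝓝 ((2 ^ j - 1) * zeta j)) := by
  have hone := tendsto_powerSum_one hj
  have htwo := hone.comp (tendsto_id.const_mul_atTop' two_pos)
  refine (((htwo.const_mul (2 ^ j)).sub hone).congr fun n => ?_).trans_eq (by ring_nf)
  simp only [Function.comp_apply, id_eq, powerSum_one_two_mul]
  ring

variable (a x y : ℝ)

/-- The coefficient of `X ^ j` in the logarithmic derivative of the infinite product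
`lim dougallProd a x y n`, for `1 ≤ j`. -/
noncomputable def dougallLogCoeff (j : ℕ) : ℝ :=
  (-1) ^ j * (((2 * a) ^ (j + 1) + (-x - y) ^ (j + 1) - (a - x) ^ (j + 1) - (a - y) ^ (j + 1)) +
    (2 ^ (j + 1) - 1) * ((a + x) ^ (j + 1) + (a + y) ^ (j + 1) - (2 * a + x + y) ^ (j + 1))) *
    zeta (j + 1)

lemma tendsto_coeff_six_dougallProd : Tendsto (fun n => coeff 6 (dougallProd a x y n)) atTop
    (𝓝 (dougallLogCoeff a x y 5 / 6 + dougallLogCoeff a x y 1 * dougallLogCoeff a x y 3 / 8 +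
      dougallLogCoeff a x y 2 ^ 2 / 18 + dougallLogCoeff a x y 1 ^ 3 / 48)) := by
  have hone (z : ℝ) (n : ℕ) := isLogDeriv_rising one_pos z n
  have hhalf (z : ℝ) (n : ℕ) := isLogDeriv_rising one_half_pos z n
  have hone_inv (z : ℝ) (n : ℕ) := isLogDeriv_rising_inv one_pos z n
  have hhalf_inv (z : ℝ) (n : ℕ) := isLogDeriv_rising_inv one_half_pos z n
  let s (n : ℕ) := risingLogDeriv 1 (2 * a) n + risingLogDeriv 1 (-x - y) n +
    risingLogDeriv (1 / 2) (a + x) n + risingLogDeriv (1 / 2) (a + y) n +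
    -risingLogDeriv 1 (a - x) n + -risingLogDeriv 1 (a - y) n +
    -risingLogDeriv (1 / 2) (2 * a + x + y) n + -risingLogDeriv (1 / 2) 0 n
  have hs (n : ℕ) : IsLogDeriv (dougallProd a x y n) (s n) :=
    (((((((hone (2 * a) n).mul (hone (-x - y) n)).mul (hhalf (a + x) n)).mul
      (hhalf (a + y) n)).mul (hone_inv (a - x) n)).mul (hone_inv (a - y) n)).mul
      (hhalf_inv (2 * a + x + y) n)).mul (hhalf_inv 0 n)
  have hcoeff (j n : ℕ) : coeff j (s n) = (-1) ^ j *
      (((2 * a) ^ (j + 1) + (-x - y) ^ (j + 1) - (a - x) ^ (j + 1) - (a - y) ^ (j + 1)) *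
        powerSum 1 (j + 1) n + ((a + x) ^ (j + 1) + (a + y) ^ (j + 1) -
          (2 * a + x + y) ^ (j + 1)) * powerSum (1 / 2) (j + 1) n) := by
    simp only [s, risingLogDeriv, map_add, map_neg, coeff_mk, zero_pow j.succ_ne_zero]
    ring
  have hlim {j : ℕ} (hj : 1 ≤ j) :
      Tendsto (fun n => coeff j (s n)) atTop (𝓝 (dougallLogCoeff a x y j)) := by
    simp only [hcoeff, dougallLogCoeff, mul_assoc ((-1 : ℝ) ^ j), add_mul]
    refine ((((tendsto_powerSum_one (by lia)).const_mul _).add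
      ((tendsto_powerSum_half (by lia)).const_mul _)).const_mul _).trans_eq (by ring_nf)
  refine ((((hlim (j := 5) (by simp)).div_const 6).add (((hlim (j := 1) le_rfl).mul
    (hlim (j := 3) (by simp))).div_const 8)).add (((hlim (j := 2) (by simp)).pow 2).div_const
    18)).add (((hlim (j := 1) le_rfl).pow 3).div_const 48) |>.congr fun n => ?_
  rw [(hs n).coeff_six (by rw [hcoeff]; ring), coeff_zero_eq_constantCoeff_apply,
    constantCoeff_dougallProd, one_mul]

lemma tendsto_mul_sum_coeff_dougallTerm_sub (j : ℕ) :
    Tendsto (fun n => (a + x) * (a + y) * ∑ l ∈ range n, coeff j (dougallTerm a x y 0 l) -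
      coeff (j + 2) (dougallProd a x y n)) atTop (𝓝 0) := by
  have haffine (f : ℝ⟦X⟧) : coeff (j + 2) (affine 0 (a + x) * affine 0 (a + y) * f) =
      (a + x) * (a + y) * coeff j f := by
    rw [show affine 0 (a + x) * affine 0 (a + y) * f =
      C ((a + x) * (a + y)) * (f * X ^ 2) by simp [affine]; ring, coeff_C_mul, coeff_mul_X_pow]
  refine ((tendsto_coeff_dougallError a x y j).const_mul ((a + x) * (a + y))).congr (fun n => ?_)
    |>.trans_eq (by rw [mul_zero])
  have h := congrArg (coeff (j + 2)) (one_add_sum_dougallTerm_eq_dougallProd_add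
    (a := a) (x := x) (y := y) n)
  rw [map_add, map_add, haffine, haffine, coeff_one, if_neg (by lia), map_sum] at h
  linear_combination -h

/-- The coefficient of `X ^ 4` in the sum of the Dougall series `∑ dougallTerm a x y 0 l`. -/
noncomputable def dougallValue : ℝ :=
  (dougallLogCoeff a x y 5 / 6 + dougallLogCoeff a x y 1 * dougallLogCoeff a x y 3 / 8 +
    dougallLogCoeff a x y 2 ^ 2 / 18 + dougallLogCoeff a x y 1 ^ 3 / 48) / ((a + x) * (a + y))

lemma tendsto_sum_coeff_four_dougallTerm (h : (a + x) * (a + y) ≠ 0) :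
    Tendsto (fun n => ∑ l ∈ range n, coeff 4 (dougallTerm a x y 0 l)) atTop
      (𝓝 (dougallValue a x y)) := by
  refine (((tendsto_mul_sum_coeff_dougallTerm_sub a x y 4).add
    (tendsto_coeff_six_dougallProd a x y)).div_const ((a + x) * (a + y))).congr (fun n => ?_)
    |>.trans_eq (by rw [zero_add, dougallValue])
  rw [sub_add_cancel, mul_div_cancel_left₀ _ h]

end ClosedForm

section Slices

lemma wzF_zero (a b c d : ℝ) (l : ℕ) :
    wzF a b c d 0 l = affine (2 * (l + 1)) (2 * a) * rising 1 (a + b) l * rising 1 (a + c) l *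
      rising 1 (a + d) l * rising (1 / 2) (a - b - c - d) (l + 1) * (rising 1 (a - b) (l + 1))⁻¹ *
      (rising 1 (a - c) (l + 1))⁻¹ * (rising 1 (a - d) (l + 1))⁻¹ *
      (rising (1 / 2) (a + b + c + d) (l + 1))⁻¹ := by
  have hsucc (z : ℝ) : (rising 1 z (l + 1))⁻¹ =
      (rising 1 z (l + 2))⁻¹ * affine (2 * (0 : ℕ) + l + 2) z :=
    inv_rising_eq one_pos z (by push_cast; ring)
  simp only [wzF, kernel, kernelHead, kernelTail, rising_zero, mul_zero, zero_add, hsucc (a - c),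
    hsucc (a - d), inv_one, Nat.cast_zero, one_mul, mul_one]
  ring

lemma wzF_zero_diagonal (a x y : ℝ) (l : ℕ) : wzF a a x y 0 l = dougallTerm a x y 0 l := by
  simp only [wzF_zero, dougallTerm, dougallFactor, sub_self, zero_sub, ← two_mul, Nat.cast_zero,
    zero_add]
  ring

lemma wzF_zero_comm (a b c d : ℝ) (l : ℕ) : wzF a c b d 0 l = wzF a b c d 0 l := by
  rw [wzF_zero, wzF_zero, show a - c - b - d = a - b - c - d by ring,
    show a + c + b + d = a + b + c + d by ring]
  ring

lemma tendsto_sum_coeff_four_wzT_of_wzF {a b c d v : ℝ}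
    (h : Tendsto (fun n => ∑ l ∈ range n, coeff 4 (wzF a b c d 0 l)) atTop (𝓝 v)) :
    Tendsto (fun n => ∑ m ∈ range n, coeff 4 (wzT a b c d m)) atTop (𝓝 v) := by
  refine (h.sub (tendsto_coeff_sum_wzF_sub_sum_wzT a b c d 4)).congr (fun n => ?_)
    |>.trans_eq (by rw [sub_zero])
  simp only [map_sub, map_sum]
  ring

lemma tendsto_sum_coeff_four_wzT_diagonal {a x y : ℝ} (h : (a + x) * (a + y) ≠ 0) :
    Tendsto (fun n => ∑ m ∈ range n, coeff 4 (wzT a a x y m)) atTop (𝓝 (dougallValue a x y)) := by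
  apply tendsto_sum_coeff_four_wzT_of_wzF
  simpa only [wzF_zero_diagonal] using tendsto_sum_coeff_four_dougallTerm a x y h

lemma tendsto_sum_coeff_four_wzT_diagonal' {a x y : ℝ} (h : (a + x) * (a + y) ≠ 0) :
    Tendsto (fun n => ∑ m ∈ range n, coeff 4 (wzT a x a y m)) atTop (𝓝 (dougallValue a x y)) := by
  apply tendsto_sum_coeff_four_wzT_of_wzF
  simpa only [wzF_zero_comm a a x y, wzF_zero_diagonal] using
    tendsto_sum_coeff_four_dougallTerm a x y h

lemma coeff_four_wzF_zero_of_add_eq_zero {b c d : ℝ} (h : b + c + d = 0) (l : ℕ) :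
    coeff 4 (wzF 0 b c d 0 l) = 2 * (b * c + b * d + c * d) ^ 2 * (1 / ((l : ℝ) + 1) ^ 6) := by
  have hF : wzF 0 b c d 0 l = C (2 * (l + 1) : ℝ) * (rising 1 b l * (rising 1 (-b) (l + 1))⁻¹ *
      (rising 1 c l * (rising 1 (-c) (l + 1))⁻¹) * (rising 1 d l * (rising 1 (-d) (l + 1))⁻¹)) := by
    have hrising : rising (1 / 2) 0 (l + 1) * (rising (1 / 2) 0 (l + 1))⁻¹ = 1 :=
      PowerSeries.mul_inv_cancel _ <| by
        rw [constantCoeff_rising]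
        exact (ascPochhammer_pos _ _ one_half_pos).ne'
    rw [wzF_zero]
    simp only [zero_add, zero_sub, h, show -b - c - d = 0 by linarith, affine, mul_zero, map_zero,
      zero_mul, add_zero]
    linear_combination C (2 * (l + 1) : ℝ) * (rising 1 b l * (rising 1 (-b) (l + 1))⁻¹ *
      (rising 1 c l * (rising 1 (-c) (l + 1))⁻¹) *
      (rising 1 d l * (rising 1 (-d) (l + 1))⁻¹)) * hrising
  have hratio (z : ℝ) := (isLogDeriv_rising one_pos z l).mul
    (isLogDeriv_rising_inv one_pos (-z) (l + 1))
  rw [hF, coeff_C_mul, (((hratio b).mul (hratio c)).mul (hratio d)).coeff_four]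
  obtain rfl : b = -c - d := by linarith
  simp only [coeff_zero_eq_constantCoeff_apply, map_mul, constantCoeff_inv,
    constantCoeff_rising_one, risingLogDeriv, powerSum, sum_range_succ, map_add, map_neg, coeff_mk,
    Nat.factorial_succ, Nat.cast_mul, Nat.cast_add_one]
  field_simp
  ring

lemma tendsto_sum_coeff_four_wzT_of_add_eq_zero {b c d : ℝ} (h : b + c + d = 0) :
    Tendsto (fun n => ∑ m ∈ range n, coeff 4 (wzT 0 b c d m)) atTop
      (𝓝 (2 * (b * c + b * d + c * d) ^ 2 * zeta 6)) := by
  apply tendsto_sum_coeff_four_wzT_of_wzF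
  simp only [coeff_four_wzF_zero_of_add_eq_zero h]
  exact ((hasSum_zeta (by norm_num)).mul_left _).tendsto_sum_nat

end Slices

section ZetaValues

lemma zeta_eq_of_hasSum {s : ℕ} (hs : s ≠ 0) {v : ℝ}
    (h : HasSum (fun n : ℕ => 1 / (n : ℝ) ^ s) v) : zeta s = v := by
  have h := (hasSum_nat_add_iff' 1).mpr h
  simp only [sum_range_one, Nat.cast_zero, zero_pow hs, div_zero, sub_zero] at h
  simpa only [Nat.cast_add_one] using! h.tsum_eq

lemma zeta_two : zeta 2 = Real.pi ^ 2 / 6 := zeta_eq_of_hasSum two_ne_zero hasSum_zeta_two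

lemma zeta_four : zeta 4 = Real.pi ^ 4 / 90 := zeta_eq_of_hasSum four_ne_zero hasSum_zeta_four

lemma zeta_six : zeta 6 = Real.pi ^ 6 / 945 := by
  have hbernoulli : bernoulli 6 = 1 / 42 := by
    rw [bernoulli_eq_bernoulli'_of_ne_one (by norm_num), bernoulli'_def]
    norm_num [sum_range_succ, bernoulli'_eq_zero_of_odd (n := 5) (by decide) (by norm_num),
      Nat.choose]
  rw [zeta_eq_of_hasSum (by norm_num) (hasSum_zeta_nat three_ne_zero)]
  norm_num [hbernoulli, Nat.factorial]
  ring

end ZetaValues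

section Quartic

/-- The coefficient of degree four of `p * f`, where `p` has coefficients `p j` and `f` has constant
coefficient one and logarithmic derivative with coefficients `s j`. -/
noncomputable def quartic (p s : ℕ → ℝ) : ℝ :=
  p 4 + p 3 * s 0 + p 2 * ((s 1 + s 0 ^ 2) / 2) + p 1 * ((2 * s 2 + 3 * s 0 * s 1 + s 0 ^ 3) / 6) +
    p 0 * ((6 * s 3 + 8 * s 0 * s 2 + 3 * s 1 ^ 2 + 6 * s 0 ^ 2 * s 1 + s 0 ^ 4) / 24)

lemma IsLogDeriv.coeff_four_mul {f s : ℝ⟦X⟧} (h : IsLogDeriv f s) (p : ℝ⟦X⟧) :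
    coeff 4 (f * p) = coeff 0 f * quartic (fun j => coeff j p) (fun j => coeff j s) := by
  rw [coeff_mul, Finset.Nat.sum_antidiagonal_eq_sum_range_succ_mk]
  simp only [sum_range_succ, sum_range_zero, h.coeff_one, h.coeff_two, h.coeff_three, h.coeff_four,
    quartic]
  ring

lemma quartic_mul_pow (p s : ℕ → ℝ) (y : ℝ) :
    quartic p s * y ^ 4 = quartic (fun j => p j * y ^ j) (fun j => s j * y ^ (j + 1)) := by
  simp only [quartic]
  ring

lemma coeff_zero_mul_affine (f : ℝ⟦X⟧) (k x : ℝ) :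
    coeff 0 (f * affine k x) = coeff 0 f * k := by
  simp [affine]

lemma coeff_succ_mul_affine (f : ℝ⟦X⟧) (k x : ℝ) (n : ℕ) :
    coeff (n + 1) (f * affine k x) = coeff (n + 1) f * k + coeff n f * x := by
  rw [affine, mul_add, ← mul_assoc, map_add, coeff_mul_C, coeff_succ_mul_X, coeff_mul_C]

lemma mk_eq_cubic {R : Type*} [CommSemiring R] {p : ℕ → R} (hp : ∀ n, p (n + 4) = 0) :
    mk p = C (p 0) + C (p 1) * X + C (p 2) * X ^ 2 + C (p 3) * X ^ 3 := by
  ext (_ | _ | _ | _ | n)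
  all_goals simp [coeff_X_pow, coeff_C, hp]

end Quartic

section Numerator
variable (a b c d M : ℝ)

/-- The coefficients of the quadratic factor `wzCertificate` at `l = 0`, multiplied by
`(4 * M - 3) * (4 * M - 1)`, where `M = m + 1`. -/
noncomputable def certificateCoeff : ℕ → ℝ
  | 0 => 2 * M * (4 * M ^ 2 - 12 * M + 3)
  | 1 => 4 * M * b - 2 * (b + c + d) - 2 * (4 * M - 1) * (2 * M + 1) * a -
      2 * M * (6 * M - 5) * (c + d)
  | 2 => 2 * (2 * M - 1) * ((c + d) ^ 2 - 2 * b * (b + c + d)) - 2 * (4 * M - 1) * a ^ 2 -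
      2 * (8 * M - 3) * (c * d) - 2 * b * (c + d)
  | 3 => 4 * (c + d) * (c * d + b * (b + c + d))
  | _ => 0

/-- The polynomial factor of `wzT` at `m = M - 1`, multiplied by `(4 * M - 3) * (4 * M - 1)`. -/
noncomputable def wzNumerator : ℝ⟦X⟧ :=
  C ((4 * M - 3) * (4 * M - 1)) * affine (2 * M) (2 * a) * affine (2 * M) (a - c) *
      affine (2 * M) (a - d) -
    mk (certificateCoeff a b c d M) * affine M (a + b) * affine (M + 1 / 2) (a - b - c - d)

lemma mk_certificateCoeff (m : ℕ) :
    mk (certificateCoeff a b c d (m + 1)) =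
      C ((4 * (m : ℝ) + 1) * (4 * m + 3)) * wzCertificate a b c d m 0 := by
  have hκ : (4 * (m : ℝ) + 1) * (4 * m + 3) * (-1 / (2 * m + 1 / 2)) = -2 * (4 * m + 3) := by
    field_simp; ring
  have hσ : (4 * (m : ℝ) + 1) * (4 * m + 3) * (1 / (2 * m + 3 / 2)) = 2 * (4 * m + 1) := by
    field_simp; ring
  have hκσ : (4 * (m : ℝ) + 1) * (4 * m + 3) * (-1 / (2 * m + 1 / 2)) * (1 / (2 * m + 3 / 2)) =
      -4 := by
    field_simp; ring
  have hhalf : (2 : ℝ⟦X⟧) * C (1 / 2) = 1 := by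
    rw [← map_ofNat C, ← map_mul, mul_one_div_cancel two_ne_zero, map_one]
  replace hκ := congrArg (C (R := ℝ)) hκ
  replace hσ := congrArg (C (R := ℝ)) hσ
  replace hκσ := congrArg (C (R := ℝ)) hκσ
  rw [mk_eq_cubic fun n => rfl, wzCertificate, certConst]
  set κ : ℝ := -1 / (2 * m + 1 / 2)
  set σ : ℝ := 1 / (2 * m + 3 / 2)
  set b' := affine 0 b
  set e' := affine (1 / 2) (-b - c - d)
  set c' := affine (m + 1) (-c)
  set d' := affine (m + 1) (-d)
  rw [map_mul] at hκ hσ hκσ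
  rw [map_mul _ _ κ] at hκσ
  linear_combination (norm := skip)
    -(affine ((m : ℝ) + (0 : ℕ) + 1) a * affine ((m : ℝ) + (0 : ℕ) + 2) a) * hκ -
      (c' ^ 2 + d' ^ 2) * hσ -
      ((b' * e' + c' * d' - (b' + e') * (c' + d')) +
        (c' * d' * (b' + e') - b' * e' * (c' + d'))) * hκσ +
      2 * ((C m * C m + (C b * C c + C b * C d + C c * C d) * X ^ 2) -
        (2 * C b + C c + C d) * C m * X - C b * X - 1) * hhalf
  simp only [certificateCoeff, b', e', c', d', affine, map_mul, map_add, map_sub, map_pow, map_neg,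
    map_natCast, map_ofNat, map_one, map_zero, Nat.cast_zero]
  ring

lemma wzT_eq (m : ℕ) :
    wzT a b c d m = C (1 / ((4 * (m : ℝ) + 1) * (4 * m + 3))) *
      (kernel a b c d m 0 * wzNumerator a b c d (m + 1)) := by
  have hk : (4 * (m : ℝ) + 1) * (4 * m + 3) ≠ 0 := by positivity
  have hC : (C (1 / ((4 * (m : ℝ) + 1) * (4 * m + 3))) : ℝ⟦X⟧) *
      C ((4 * (m : ℝ) + 1) * (4 * m + 3)) = 1 := by
    rw [← map_mul, one_div_mul_cancel hk, map_one]
  rw [wzNumerator, mk_certificateCoeff, wzT, wzF, wzG,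
    show (4 * ((m : ℝ) + 1) - 3) * (4 * (m + 1) - 1) = (4 * m + 1) * (4 * m + 3) by ring,
    show (m : ℝ) + 1 + 1 / 2 = m + 3 / 2 by ring, show 2 * ((m : ℝ) + 1) = 2 * m + 2 by ring]
  simp only [Nat.cast_zero, add_zero, show 2 * ((m : ℝ) + 1) = 2 * m + 2 by ring]
  linear_combination -(kernel a b c d m 0 * (affine (2 * (m : ℝ) + 2) (2 * a) *
    affine (2 * (m : ℝ) + 2) (a - c) * affine (2 * (m : ℝ) + 2) (a - d) -
    wzCertificate a b c d m 0 * affine ((m : ℝ) + 1) (a + b) *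
    affine ((m : ℝ) + 3 / 2) (a - b - c - d))) * hC

end Numerator

section KernelCoeff
variable (a b c d : ℝ) (m : ℕ)

/-- The logarithmic derivative of `kernel a b c d m 0`. -/
noncomputable def kernelLogDeriv : ℝ⟦X⟧ :=
  risingLogDeriv 1 (-c - b) m + risingLogDeriv 1 (-d - b) m + risingLogDeriv (1 / 2) (b + d) m +
    risingLogDeriv (1 / 2) (b + c) m + risingLogDeriv 1 (-c - d) (2 * m) +
    risingLogDeriv 1 (a + b) m + risingLogDeriv (1 / 2) (a - b - c - d) (m + 1) -
    risingLogDeriv 1 (a - b) (m + 1) - risingLogDeriv (1 / 2) (a + b + c + d) (m + 1) -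
    risingLogDeriv 1 (a - c) (2 * m + 2) - risingLogDeriv 1 (a - d) (2 * m + 2)

lemma isLogDeriv_kernel_zero : IsLogDeriv (kernel a b c d m 0) (kernelLogDeriv a b c d m) := by
  have hone := isLogDeriv_rising one_pos
  have hhalf := isLogDeriv_rising one_half_pos
  have hone' := isLogDeriv_rising_inv one_pos
  have hhalf' := isLogDeriv_rising_inv one_half_pos
  have hzero : risingLogDeriv (1 / 2) 0 (2 * m) = 0 := by ext j; simp [risingLogDeriv]
  have hempty (x : ℝ) : risingLogDeriv 1 x 0 = 0 := by ext j; simp [risingLogDeriv, powerSum]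
  have hhead := (((((hone (-c - b) m).mul (hone (-d - b) m)).mul (hhalf (b + d) m)).mul
    (hhalf (b + c) m)).mul (hone (-c - d) (2 * m))).mul (hhalf' 0 (2 * m))
  have htail := (((((((hone (a + b) m).mul (hhalf (a - b - c - d) (m + 1))).mul
    (hone (a + c) 0)).mul (hone (a + d) 0)).mul (hone' (a - b) (m + 1))).mul
    (hhalf' (a + b + c + d) (m + 1))).mul (hone' (a - c) (2 * m + 2))).mul
    (hone' (a - d) (2 * m + 2))
  have h := hhead.mul htail
  rw [hzero, hempty, hempty] at h
  convert h using 1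
  · rfl
  · rw [kernelLogDeriv]
    ring

lemma four_pow_mul_factorial_mul_ascPochhammer_half (n : ℕ) :
    4 ^ n * (n.factorial : ℝ) * (ascPochhammer ℝ n).eval (1 / 2) = (2 * n).factorial := by
  induction n with
  | zero => simp
  | succ n ih =>
    rw [show 2 * (n + 1) = 2 * n + 1 + 1 by ring, Nat.factorial_succ (2 * n + 1),
      Nat.factorial_succ (2 * n), Nat.factorial_succ n, ascPochhammer_succ_eval]
    push_cast
    rw [← ih]
    ring

lemma ascPochhammer_half_two_mul (m : ℕ) :
    (ascPochhammer ℝ (2 * m)).eval (1 / 2) * (4 ^ m) ^ 2 =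
      (2 * m).centralBinom * (2 * m).factorial := by
  have hfact : ((2 * m).factorial : ℝ) ≠ 0 := by positivity
  have hchoose := Nat.choose_mul_factorial_mul_factorial (show 2 * m ≤ 2 * (2 * m) by omega)
  rw [← Nat.centralBinom_eq_two_mul_choose, show 2 * (2 * m) - 2 * m = 2 * m by omega] at hchoose
  have hhalf := four_pow_mul_factorial_mul_ascPochhammer_half (2 * m)
  rw [← hchoose, show (4 : ℝ) ^ (2 * m) = (4 ^ m) ^ 2 by rw [← pow_mul, mul_comm]] at hhalf
  push_cast at hhalf
  refine mul_right_cancel₀ hfact ?_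
  linear_combination hhalf

lemma coeff_zero_kernel_zero : coeff 0 (kernel a b c d m 0) =
    1 / ((2 * m).centralBinom * ((m + 1) * (2 * m + 1) ^ 2 * (2 * m + 2) ^ 2)) := by
  have hhalf := four_pow_mul_factorial_mul_ascPochhammer_half m
  have hhalf₂ := ascPochhammer_half_two_mul m
  have hsucc := (ascPochhammer_pos (m + 1) (1 / 2 : ℝ) one_half_pos).ne'
  have hbinom : ((2 * m).centralBinom : ℝ) ≠ 0 := by exact_mod_cast (Nat.centralBinom_pos _).ne'
  have hpos := (ascPochhammer_pos m (1 / 2 : ℝ) one_half_pos).ne'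
  simp only [kernel, kernelHead, kernelTail, coeff_zero_eq_constantCoeff, map_mul,
    constantCoeff_inv, constantCoeff_rising, ascPochhammer_eval_one, add_zero,
    ascPochhammer_zero, Polynomial.eval_one, Nat.factorial_succ]
  push_cast
  rw [eq_div_of_mul_eq (by positivity) hhalf₂, ← hhalf]
  field_simp
  ring

/-- The power sums of the logarithmic derivatives, cleared of the denominators that come from the
last factors of the rising factorials in `kernel a b c d m 0`. -/
noncomputable def scaledPowerSum (k : ℝ) (m j : ℕ) : ℝ :=
  powerSum k j m * ((m + 1) * (2 * m + 1)) ^ j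

/-- The coefficient of degree `j` of `kernelLogDeriv a b c d m`, multiplied by
`(M * (2 * M - 1)) ^ (j + 1)` with `M = m + 1`, in terms of `E = scaledPowerSum 1 m` and
`O = scaledPowerSum (1 / 2) m`. -/
noncomputable def scaledLogCoeff (a b c d M : ℝ) (E O : ℕ → ℝ) (j : ℕ) : ℝ :=
  (-1) ^ j * (((-c - b) ^ (j + 1) + (-d - b) ^ (j + 1) + (a + b) ^ (j + 1) - (a - b) ^ (j + 1) +
        (1 / 2) ^ (j + 1) * ((-c - d) ^ (j + 1) - (a - c) ^ (j + 1) - (a - d) ^ (j + 1))) *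
      E (j + 1) +
    ((b + d) ^ (j + 1) + (b + c) ^ (j + 1) + (a - b - c - d) ^ (j + 1) -
        (a + b + c + d) ^ (j + 1) +
        (1 / 2) ^ (j + 1) * ((-c - d) ^ (j + 1) - (a - c) ^ (j + 1) - (a - d) ^ (j + 1))) *
      O (j + 1) -
    (a - b) ^ (j + 1) * (2 * M - 1) ^ (j + 1) +
    ((a - b - c - d) ^ (j + 1) - (a + b + c + d) ^ (j + 1)) * (2 * M) ^ (j + 1) -
    ((a - c) ^ (j + 1) + (a - d) ^ (j + 1)) * (M ^ (j + 1) + (M - 1 / 2) ^ (j + 1)))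

lemma powerSum_succ (k : ℝ) (j n : ℕ) :
    powerSum k j (n + 1) = powerSum k j n + 1 / (k + n) ^ j := sum_range_succ _ _

lemma coeff_kernelLogDeriv_mul_pow (j : ℕ) :
    coeff j (kernelLogDeriv a b c d m) * ((m + 1) * (2 * m + 1)) ^ (j + 1) =
      scaledLogCoeff a b c d (m + 1) (scaledPowerSum 1 m) (scaledPowerSum (1 / 2) m) j := by
  set y : ℝ := (m + 1) * (2 * m + 1) with hy
  have hlast {x z : ℝ} (hx : x ≠ 0) (hz : z * x = y) :
      1 / x ^ (j + 1) * y ^ (j + 1) = z ^ (j + 1) := by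
    rw [← hz, mul_pow]
    field_simp
  have hone : 1 / (1 + (m : ℝ)) ^ (j + 1) * y ^ (j + 1) =
      (2 * ((m : ℝ) + 1) - 1) ^ (j + 1) :=
    hlast (by positivity) (by rw [hy]; ring)
  have hhalf : 1 / (1 / 2 + (m : ℝ)) ^ (j + 1) * y ^ (j + 1) =
      (2 * ((m : ℝ) + 1)) ^ (j + 1) :=
    hlast (by positivity) (by rw [hy]; ring)
  have hodd : 1 / (1 + 2 * (m : ℝ)) ^ (j + 1) * y ^ (j + 1) = ((m : ℝ) + 1) ^ (j + 1) :=
    hlast (by positivity) (by rw [hy]; ring)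
  have heven : 1 / (1 + (2 * (m : ℝ) + 1)) ^ (j + 1) * y ^ (j + 1) =
      ((m : ℝ) + 1 - 1 / 2) ^ (j + 1) :=
    hlast (by positivity) (by rw [hy]; ring)
  have hdouble : powerSum 1 (j + 1) (2 * m) =
      (1 / 2) ^ (j + 1) * (powerSum 1 (j + 1) m + powerSum (1 / 2) (j + 1) m) := by
    rw [← powerSum_one_two_mul, ← mul_assoc, ← mul_pow, one_div_mul_cancel two_ne_zero, one_pow,
      one_mul]
  simp only [kernelLogDeriv, risingLogDeriv, map_add, map_sub, coeff_mk, scaledLogCoeff,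
    scaledPowerSum, show 2 * m + 2 = 2 * m + 1 + 1 from rfl, powerSum_succ, hdouble]
  push_cast
  linear_combination (-1) ^ j * (-(a - b) ^ (j + 1) * hone +
    ((a - b - c - d) ^ (j + 1) - (a + b + c + d) ^ (j + 1)) * hhalf -
    ((a - c) ^ (j + 1) + (a - d) ^ (j + 1)) * (hodd + heven))

/-- The coefficient of degree four of `wzT a b c d m`, up to the factor `wzTFactor m`, as a
polynomial in `M = m + 1` and the scaled power sums. -/
noncomputable def wzTQuartic (a b c d M : ℝ) (E O : ℕ → ℝ) : ℝ :=
  quartic (fun j => coeff j (wzNumerator a b c d M) * (M * (2 * M - 1)) ^ j)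
    (scaledLogCoeff a b c d M E O)

/-- The parameter-free factor of the coefficient of degree four of `wzT`. -/
noncomputable def wzTFactor (m : ℕ) : ℝ :=
  1 / ((2 * m).centralBinom *
    (4 * (m + 1) ^ 7 * (2 * m + 1) ^ 6 * ((4 * m + 1) * (4 * m + 3))))

lemma coeff_four_wzT :
    coeff 4 (wzT a b c d m) = wzTFactor m *
      wzTQuartic a b c d (m + 1) (scaledPowerSum 1 m) (scaledPowerSum (1 / 2) m) := by
  have hfactor : 1 / ((4 * (m : ℝ) + 1) * (4 * m + 3)) * coeff 0 (kernel a b c d m 0) =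
      wzTFactor m * ((m + 1) * (2 * m + 1)) ^ 4 := by
    have hbinom : ((2 * m).centralBinom : ℝ) ≠ 0 := by
      exact_mod_cast (Nat.centralBinom_pos _).ne'
    rw [coeff_zero_kernel_zero, wzTFactor]
    field_simp
    ring
  rw [wzT_eq, coeff_C_mul, (isLogDeriv_kernel_zero a b c d m).coeff_four_mul, ← mul_assoc, hfactor,
    mul_assoc, mul_comm (_ ^ 4), quartic_mul_pow, wzTQuartic,
    show 2 * ((m : ℝ) + 1) - 1 = 2 * m + 1 by ring]
  simp only [coeff_kernelLogDeriv_mul_pow]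

end KernelCoeff

section Combination

/-- Weights and parameters `(a, a, x, y)` of the specializations summed by Dougall's theorem. -/
noncomputable def diagonalNodes : List (ℝ × ℝ × ℝ × ℝ) :=
  [(1009 / 33600, 1, -2, 1), (-1 / 336, 2, 1, 1), (6107 / 151200, 2, 1, 2), (-13 / 1680, 2, -1, -1),
    (-136 / 945, 2, -1, 1), (721 / 7200, 2, -1, 2), (229 / 126, 1, 0, 0)]

/-- Weights and parameters `(a, x, a, y)` of the specializations summed by Dougall's theorem. -/
noncomputable def diagonalNodes' : List (ℝ × ℝ × ℝ × ℝ) :=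
  [(-1 / 60, 1, 0, 1), (-6467 / 302400, 1, 1, 2), (19 / 7560, 1, 2, 1), (23 / 2520, 2, 1, -1),
    (4 / 4725, 2, 1, 2), (-1151 / 672, 1, 1, 0), (13 / 6300, 1, -2, 1), (-1 / 35, 0, 1, 1)]

/-- The rational combination of specializations of the transformed series that produces the pairs of
consecutive terms of the binomial series. In the two specializations outside the lists the
parameters satisfy `a = 0` and `b + c + d = 0`. -/
noncomputable def combination (f : ℝ → ℝ → ℝ → ℝ → ℝ) : ℝ :=
  (diagonalNodes.map fun (w, a, x, y) => w * f a a x y).sum +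
    (diagonalNodes'.map fun (w, a, x, y) => w * f a x a y).sum +
    (-16 / 945 * f 0 (-3) 1 2 + 23 / 280 * f 0 (-2) 1 1)

lemma combination_sum (f : ℕ → ℝ → ℝ → ℝ → ℝ → ℝ) (n : ℕ) :
    ∑ m ∈ range n, combination (f m) = combination fun a b c d => ∑ m ∈ range n, f m a b c d := by
  simp only [combination, diagonalNodes, diagonalNodes', List.map_cons, List.map_nil,
    List.sum_cons, List.sum_nil, sum_add_distrib, mul_sum, sum_const_zero]

lemma combination_const_mul (D : ℝ) (f : ℝ → ℝ → ℝ → ℝ → ℝ) :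
    combination (fun a b c d => D * f a b c d) = D * combination f := by
  simp only [combination, diagonalNodes, diagonalNodes', List.map_cons, List.map_nil,
    List.sum_cons, List.sum_nil, mul_add, mul_left_comm D, mul_zero]

set_option maxHeartbeats 1000000 in
-- A polynomial identity in nine variables, summed over all seventeen nodes.
lemma combination_wzTQuartic (M : ℝ) (E O : ℕ → ℝ) :
    combination (fun a b c d => wzTQuartic a b c d M E O) =
      2 * M ^ 3 * (2 * M - 1) * (4 * M - 1) * ((E 4 - O 4) / 2 - 9 * M ^ 4) +
        1 / 2 * (2 * M - 1) ^ 3 * M ^ 2 *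
          ((E 4 - O 4) / 2 - 8 * M ^ 4 + 9 / 16 * (2 * M - 1) ^ 4) := by
  simp only [combination, diagonalNodes, diagonalNodes', List.map_cons, List.map_nil,
    List.sum_cons, List.sum_nil, wzTQuartic, quartic, wzNumerator, map_sub,
    coeff_zero_mul_affine, coeff_succ_mul_affine, coeff_mk, certificateCoeff, scaledLogCoeff,
    coeff_zero_C, coeff_succ_C]
  norm_num only
  ring

end Combination

section Value

lemma combination_dougallValue :
    (diagonalNodes.map fun (w, a, x, y) => w * dougallValue a x y).sum +
        (diagonalNodes'.map fun (w, a, x, y) => w * dougallValue a x y).sum +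
        (-16 / 945 * (2 * (-3 * 1 + -3 * 2 + 1 * 2) ^ 2 * zeta 6) +
          23 / 280 * (2 * (-2 * 1 + -2 * 1 + 1 * 1) ^ 2 * zeta 6)) =
      -(22 * zeta 3 ^ 2 / 15) - 97 * Real.pi ^ 6 / 34020 := by
  simp only [diagonalNodes, diagonalNodes', List.map_cons, List.map_nil, List.sum_cons,
    List.sum_nil, dougallValue, dougallLogCoeff]
  norm_num only [zeta_two, zeta_four, zeta_six]
  ring

lemma tendsto_sum_combination_coeff_four_wzT :
    Tendsto (fun n => ∑ m ∈ range n, combination fun a b c d => coeff 4 (wzT a b c d m)) atTop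
      (𝓝 (-(22 * zeta 3 ^ 2 / 15) - 97 * Real.pi ^ 6 / 34020)) := by
  rw [← combination_dougallValue]
  simp only [combination_sum fun m a b c d => coeff 4 (wzT a b c d m)]
  refine ((tendsto_list_sum _ ?_).add (tendsto_list_sum _ ?_)).add
    (((tendsto_sum_coeff_four_wzT_of_add_eq_zero ?_).const_mul _).add
      ((tendsto_sum_coeff_four_wzT_of_add_eq_zero ?_).const_mul _))
  · rintro ⟨w, a, x, y⟩ hmem
    refine (tendsto_sum_coeff_four_wzT_diagonal ?_).const_mul w
    simp only [diagonalNodes, List.mem_cons, Prod.mk.injEq, List.not_mem_nil, or_false] at hmem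
    rcases hmem with h | h | h | h | h | h | h <;> norm_num [h]
  · rintro ⟨w, a, x, y⟩ hmem
    refine (tendsto_sum_coeff_four_wzT_diagonal' ?_).const_mul w
    simp only [diagonalNodes', List.mem_cons, Prod.mk.injEq, List.not_mem_nil, or_false] at hmem
    rcases hmem with h | h | h | h | h | h | h | h <;> norm_num [h]
  all_goals norm_num

end Value

section Series

/-- The summand of index `n + 1` of the series of inverse central binomial coefficients. -/
noncomputable def binomTerm (n : ℕ) : ℝ :=
  1 / ((n + 1) ^ 2 * ((2 * (n + 1)).choose (n + 1))) *
    (8 * A 4 (n + 1) + (-1) ^ (n + 1) / (n + 1) ^ 4)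

lemma A_succ (s n : ℕ) : A s (n + 1) = A s n + (-1) ^ (n + 1) / (n + 1) ^ s :=
  sum_range_succ ..

lemma A_two_mul (s m : ℕ) :
    A s (2 * m) = (powerSum 1 s m - powerSum (1 / 2) s m) / 2 ^ s := by
  induction m with
  | zero => simp [A, powerSum]
  | succ m ih =>
    have hodd : (1 / 2 + m : ℝ) ^ s * 2 ^ s = (2 * m + 1) ^ s := by rw [← mul_pow]; ring
    have heven : (1 + m : ℝ) ^ s * 2 ^ s = (2 * m + 1 + 1) ^ s := by rw [← mul_pow]; ring
    rw [show 2 * (m + 1) = 2 * m + 1 + 1 by ring, A_succ, A_succ, ih, powerSum_succ,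
      powerSum_succ, (odd_two_mul_add_one m).neg_one_pow,
      (odd_two_mul_add_one m).add_one.neg_one_pow]
    push_cast
    rw [← hodd, ← heven]
    field_simp
    ring

lemma abs_neg_one_pow_div_le_one (s n : ℕ) : |(-1 : ℝ) ^ (n + 1) / (n + 1) ^ s| ≤ 1 := by
  rw [abs_div, abs_neg_one_pow, abs_of_pos (by positivity)]
  exact div_le_one_of_le₀ (one_le_pow₀ (by simp)) (by positivity)

lemma abs_A_le (s n : ℕ) : |A s n| ≤ n := by
  refine (abs_sum_le_sum_abs _ _).trans ?_
  simpa using sum_le_card_nsmul (range n) _ 1 fun i _ => abs_neg_one_pow_div_le_one s i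

lemma tendsto_binomTerm : Tendsto binomTerm atTop (𝓝 0) := by
  refine squeeze_zero_norm (a := fun n : ℕ => 9 * (1 / ((n : ℝ) + 1))) (fun n => ?_)
    (by simpa using (tendsto_one_div_add_atTop_nhds_zero_nat (𝕜 := ℝ)).const_mul 9)
  have hchoose : (1 : ℝ) ≤ (2 * (n + 1)).choose (n + 1) := by
    exact_mod_cast Nat.choose_pos (by omega)
  have hA : |A 4 (n + 1)| ≤ n + 1 := by exact_mod_cast abs_A_le 4 (n + 1)
  have hsum : |8 * A 4 (n + 1) + (-1) ^ (n + 1) / ((n : ℝ) + 1) ^ 4| ≤ 9 * ((n : ℝ) + 1) := by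
    refine (abs_add_le _ _).trans ?_
    rw [abs_mul, abs_of_pos (by norm_num : (0 : ℝ) < 8)]
    linarith [abs_neg_one_pow_div_le_one 4 n, (n.cast_nonneg : (0 : ℝ) ≤ n)]
  calc ‖binomTerm n‖
      = |8 * A 4 (n + 1) + (-1) ^ (n + 1) / ((n : ℝ) + 1) ^ 4| /
          ((n + 1) ^ 2 * (2 * (n + 1)).choose (n + 1)) := by
        rw [Real.norm_eq_abs, binomTerm, abs_mul, abs_of_pos (by positivity)]; ring
    _ ≤ 9 * (n + 1) / ((n + 1) ^ 2 * 1) := by gcongr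
    _ = 9 * (1 / ((n : ℝ) + 1)) := by field_simp

lemma choose_two_mul_succ (n : ℕ) :
    ((2 * (n + 1)).choose (n + 1) : ℝ) = 2 * (2 * n + 1) / (n + 1) * n.centralBinom := by
  have h : ((n : ℝ) + 1) * (n + 1).centralBinom = 2 * (2 * n + 1) * n.centralBinom := by
    exact_mod_cast Nat.succ_mul_centralBinom_succ n
  rw [← Nat.centralBinom_eq_two_mul_choose]
  field_simp
  linear_combination h

lemma binomTerm_two_mul (m : ℕ) :
    binomTerm (2 * m) = wzTFactor m * (2 * (m + 1) ^ 3 * (2 * m + 1) * (4 * m + 3) *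
      ((scaledPowerSum 1 m 4 - scaledPowerSum (1 / 2) m 4) / 2 - 9 * (m + 1) ^ 4)) := by
  have hbinom : ((2 * m).centralBinom : ℝ) ≠ 0 := by exact_mod_cast (Nat.centralBinom_pos _).ne'
  rw [binomTerm, choose_two_mul_succ, A_succ, A_two_mul, (odd_two_mul_add_one m).neg_one_pow,
    wzTFactor, scaledPowerSum, scaledPowerSum]
  push_cast
  rw [show 2 * (2 * (m : ℝ)) + 1 = 4 * m + 1 by ring]
  field_simp
  ring

lemma binomTerm_two_mul_add_one (m : ℕ) :
    binomTerm (2 * m + 1) = wzTFactor m * (1 / 2 * (2 * m + 1) ^ 3 * (m + 1) ^ 2 *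
      ((scaledPowerSum 1 m 4 - scaledPowerSum (1 / 2) m 4) / 2 - 8 * (m + 1) ^ 4 +
        9 / 16 * (2 * m + 1) ^ 4)) := by
  have hbinom : ((2 * m).centralBinom : ℝ) ≠ 0 := by exact_mod_cast (Nat.centralBinom_pos _).ne'
  rw [binomTerm, choose_two_mul_succ, Nat.centralBinom_eq_two_mul_choose (2 * m + 1),
    choose_two_mul_succ, A_succ, A_succ, A_two_mul, (odd_two_mul_add_one m).neg_one_pow,
    (odd_two_mul_add_one m).add_one.neg_one_pow, wzTFactor, scaledPowerSum, scaledPowerSum]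
  push_cast
  rw [show 2 * (2 * (m : ℝ)) + 1 = 4 * m + 1 by ring,
    show 2 * (2 * (m : ℝ) + 1) + 1 = 4 * m + 3 by ring,
    show 2 * (m : ℝ) + 1 + 1 = 2 * (m + 1) by ring]
  field_simp
  ring

lemma combination_coeff_four_wzT (m : ℕ) :
    combination (fun a b c d => coeff 4 (wzT a b c d m)) =
      binomTerm (2 * m) + binomTerm (2 * m + 1) := by
  simp only [coeff_four_wzT, combination_const_mul, combination_wzTQuartic,
    binomTerm_two_mul, binomTerm_two_mul_add_one]
  ring

lemma tendsto_of_even_of_odd {α : Type*} {l : Filter α} {f : ℕ → α}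
    (heven : Tendsto (fun n => f (2 * n)) atTop l)
    (hodd : Tendsto (fun n => f (2 * n + 1)) atTop l) : Tendsto f atTop l := by
  intro s hs
  obtain ⟨M, hM⟩ := mem_atTop_sets.1 (heven hs)
  obtain ⟨N, hN⟩ := mem_atTop_sets.1 (hodd hs)
  refine mem_atTop_sets.2 ⟨2 * (M + N) + 1, fun n hn => ?_⟩
  obtain ⟨k, rfl | rfl⟩ := n.even_or_odd'
  · exact hM k (by omega)
  · exact hN k (by omega)

lemma tendsto_sum_range_of_pairs {E : Type*} [AddCommMonoid E] [TopologicalSpace E]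
    [ContinuousAdd E] {f : ℕ → E} {L : E}
    (hpairs : Tendsto (fun n => ∑ m ∈ range n, (f (2 * m) + f (2 * m + 1))) atTop (𝓝 L))
    (hf : Tendsto f atTop (𝓝 0)) : Tendsto (fun N => ∑ n ∈ range N, f n) atTop (𝓝 L) := by
  have hsum (n : ℕ) : ∑ m ∈ range n, (f (2 * m) + f (2 * m + 1)) = ∑ m ∈ range (2 * n), f m := by
    induction n with
    | zero => simp
    | succ n ih =>
      rw [sum_range_succ, ih, mul_add_one, sum_range_succ, sum_range_succ, add_assoc]
  simp only [hsum] at hpairs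
  refine tendsto_of_even_of_odd hpairs ?_
  simpa only [sum_range_succ, add_zero, Function.comp_def, id] using
    hpairs.add (hf.comp (tendsto_id.const_mul_atTop' two_pos))

end Series

end WZ

theorem stmt_13 :
    Tendsto (fun N => ∑ n ∈ Finset.range N,
      1 / (((n:ℝ)+1)^2 * ((2*(n+1)).choose (n+1) : ℝ)) *
        (8 * A 4 (n+1) + (-1:ℝ)^(n+1) / ((n:ℝ)+1)^4))
      atTop (𝓝 (-(22 * (zeta 3)^2 / 15) - 97 * Real.pi^6 / 34020)) := by
  refine WZ.tendsto_sum_range_of_pairs (f := WZ.binomTerm) ?_ WZ.tendsto_binomTerm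
  simpa only [WZ.combination_coeff_four_wzT] using WZ.tendsto_sum_combination_coeff_four_wzT
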